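/- arXiv:1405.0994 — 2 statements merged into one kernel-verified Lean document; each statement's English description precedes it below -/
import Mathlib

section
/- Let G be a group in the class 𝒟, and let u ∈ G be a non-identity element whose centralizer in G is exactly the cyclic subgroup ⟨u⟩. Let m be a non-zero integer. Then the free product with amalgamation H = G *_{(u = x^m)} ⟨x⟩ also belongs to the class 𝒟. -/
universe u v w x

/-- `P`, together with `ja : A →* P` and `jb : B →* P`, is the free product of `A` and `B`
amalgamating `H` along `φ : H →* A` and `ψ : H →* B`, i.e. the pushout of `φ` and `ψ` in
the category of groups. -/
def IsAmalgamatedFreeProduct {H : Type u} {A : Type v} {B : Type w} {P : Type x}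
    [Group H] [Group A] [Group B] [Group P]
    (φ : H →* A) (ψ : H →* B) (ja : A →* P) (jb : B →* P) : Prop :=
  ja.comp φ = jb.comp ψ ∧
    ∀ (Q : Type (max u v w x)) [Group Q] (f : A →* Q) (g : B →* Q),
      f.comp φ = g.comp ψ → ∃! h : P →* Q, h.comp ja = f ∧ h.comp jb = g

/-- An element `g` of a group is indivisible if it is not a proper power. -/
def Indivisible {G : Type*} [Group G] (g : G) : Prop :=
  ¬ ∃ (v : G) (n : ℕ), 1 < n ∧ v ^ n = g

/-- `g` has no `p`-th root in `G` for some prime `p`. -/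
def NoPrimeRoot {G : Type*} [Group G] (g : G) : Prop :=
  ∃ p : ℕ, p.Prime ∧ ¬ ∃ h : G, h ^ p = g

/-- G. Baumslag's class `𝒟` (for the set of all primes): (1) extraction of roots is
unique; (2) the centralizer of an element with no `p`-th root (some prime `p`) embeds in
the additive group `ℚ`; (3) such an element satisfies `C_G(g^r) = C_G(g)` for `r ≠ 0`;
(4) for such an element, `f⁻¹ g^r f = g^s` with `r, s ≠ 0` implies `r = s`. -/
def ClassD (G : Type*) [Group G] : Prop :=
  (∀ (g h : G) (r : ℤ), r ≠ 0 → g ^ r = h ^ r → g = h) ∧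
    (∀ g : G, NoPrimeRoot g →
      ∃ f : Subgroup.centralizer ({g} : Set G) →* Multiplicative ℚ, Function.Injective f) ∧
    (∀ g : G, NoPrimeRoot g → ∀ r : ℤ, r ≠ 0 →
      Subgroup.centralizer ({g ^ r} : Set G) = Subgroup.centralizer ({g} : Set G)) ∧
    (∀ g : G, NoPrimeRoot g → ∀ (f : G) (r s : ℤ), r ≠ 0 → s ≠ 0 →
      f⁻¹ * g ^ r * f = g ^ s → r = s)

/-- G. Baumslag's class `𝒟₀`: the class `𝒟` together with the condition (5) that the
centralizer of every indivisible element `g` is `⟨g⟩`. -/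
def ClassD0 (G : Type*) [Group G] : Prop :=
  ClassD G ∧ ∀ g : G, Indivisible g →
    Subgroup.centralizer ({g} : Set G) = Subgroup.zpowers g

/-!
The amalgamated free product acts without inversions on its Bass–Serre tree, whose vertex
stabilizers are conjugates of the two factors and so lie in `𝒟`. Since `⟨u⟩` is malnormal in `G`,
a nontrivial element fixes at most one vertex of the type of the other factor; this makes the
action acylindrical. If `h` has a fixed vertex, it has one, of that type if possible, which is
also fixed by every element conjugating a nontrivial power of `h` to another one, and the
conditions for `h` reduce to those in the stabilizer. Otherwise `h` and all its nontrivial powers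
are translations along an axis, so by acylindricity their centralizers embed into `ℤ`, and since
conjugation preserves translation lengths, `f⁻¹ h ^ r f = h ^ s` forces `|r| = |s|`.

The coset graph is a tree because, `C` being the intersection of the factors, the product acts on
two copies of `P ⧸ C` so that one factor acts by translations and the other by translations
conjugated by the exchange of the two trivial cosets: following the base point under this action,
one changes sides exactly when crossing the base edge, which is therefore a bridge.
-/

section TreeMetric

variable {V : Type*} {T : SimpleGraph V}

theorem exists_adj_dist_eq_add_one (hT : T.Connected) {x y : V} (hxy : x ≠ y) :
    ∃ z, T.Adj x z ∧ T.dist y x = T.dist y z + 1 := by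
  obtain ⟨p, -, hp⟩ := hT.exists_path_of_dist x y
  cases p with
  | nil => exact absurd rfl hxy
  | cons hadj q =>
    refine ⟨_, hadj, le_antisymm ?_ ?_⟩
    · rw [← SimpleGraph.dist_eq_one_iff_adj.2 hadj, T.dist_comm (u := x)]
      exact hT.dist_triangle
    · rw [T.dist_comm, T.dist_comm (u := y), ← hp, SimpleGraph.Walk.length_cons]
      exact Nat.succ_le_succ (T.dist_le q)

theorem eq_of_adj_of_dist_eq_add_one (hT : T.IsTree) {x y z z' : V} (hz : T.Adj x z)
    (hz' : T.Adj x z') (hyz : T.dist y x = T.dist y z + 1)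
    (hyz' : T.dist y x = T.dist y z' + 1) : z = z' := by
  have exists_path {w : V} (hw : T.Adj x w) (hyw : T.dist y x = T.dist y w + 1) :
      ∃ q : T.Walk w y, (SimpleGraph.Walk.cons hw q).IsPath := by
    obtain ⟨q, hq⟩ := hT.connected.exists_walk_length_eq_dist w y
    exact ⟨q, SimpleGraph.Walk.isPath_of_length_eq_dist _
      (by rw [SimpleGraph.Walk.length_cons, hq, T.dist_comm, ← hyw, T.dist_comm])⟩
  obtain ⟨q, hq⟩ := exists_path hz hyz
  obtain ⟨q', hq'⟩ := exists_path hz' hyz'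
  simpa using congrArg SimpleGraph.Walk.snd ((hT.existsUnique_path x y).unique hq hq')

theorem dist_eq_dist_add_dist_of_adj (hT : T.IsTree) {x x' y z : V} (hadj : T.Adj x x')
    (hy : T.dist y x' = T.dist y x + 1) (hz : T.dist z x = T.dist z x' + 1) :
    T.dist y z = T.dist y x + T.dist x z := by
  induction hn : T.dist y x generalizing x x' with
  | zero => rw [hT.connected.dist_eq_zero_iff.1 hn, zero_add]
  | succ n ih =>
    obtain ⟨x₀, hadj₀, hx₀⟩ := exists_adj_dist_eq_add_one hT.connected (x := x) (y := y) (by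
      rintro rfl
      simp at hn)
    have hz₀ : T.dist z x₀ = T.dist z x + 1 := by
      refine (hT.dist_eq_dist_add_one_of_adj z hadj₀).resolve_left fun h => ?_
      obtain rfl := eq_of_adj_of_dist_eq_add_one hT hadj hadj₀ hz h
      omega
    have := ih hadj₀.symm hx₀ hz₀ (by omega)
    grind [SimpleGraph.dist_comm]

theorem dist_add_dist_le_or_le (hT : T.IsTree) (x y z w : V) :
    T.dist x y + T.dist z w ≤ T.dist x z + T.dist y w ∨
      T.dist x y + T.dist z w ≤ T.dist x w + T.dist y z := by
  induction hn : T.dist y x generalizing x with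
  | zero =>
    rw [hT.connected.dist_eq_zero_iff.1 hn, T.dist_self, zero_add, T.dist_comm (v := z)]
    exact .inl hT.connected.dist_triangle
  | succ n ih =>
    obtain ⟨x', hadj, hx'⟩ := exists_adj_dist_eq_add_one hT.connected (x := x) (y := y) (by
      rintro rfl
      simp at hn)
    have hzw : T.dist z w ≤ T.dist z x + T.dist x w := hT.connected.dist_triangle
    rcases hT.dist_eq_dist_add_one_of_adj z hadj with hz | hz
    · rcases hT.dist_eq_dist_add_one_of_adj w hadj with hw | hw
      · have := ih x' (by omega)
        grind [SimpleGraph.dist_comm]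
      · have := dist_eq_dist_add_dist_of_adj hT hadj hw hx'
        grind [SimpleGraph.dist_comm]
    · have := dist_eq_dist_add_dist_of_adj hT hadj hz hx'
      grind [SimpleGraph.dist_comm]

end TreeMetric

section TreeAction

variable {V P : Type*} {T : SimpleGraph V} [Group P] [MulAction P V]

/-- `P` acts on the graph `T` by automorphisms. -/
def ActsByAutomorphisms (P : Type*) [Group P] [MulAction P V] (T : SimpleGraph V) : Prop :=
  ∀ (g : P) ⦃v w : V⦄, T.Adj v w → T.Adj (g • v) (g • w)

/-- `h` translates the vertex `p` along an axis: `p ≠ h • p` and the points `h ^ n • p` lie,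
in this order, on a geodesic ray. -/
def IsTranslationAt (T : SimpleGraph V) (h : P) (p : V) : Prop :=
  0 < T.dist p (h • p) ∧ ∀ n : ℕ, T.dist p (h ^ n • p) = n * T.dist p (h • p)

/-- The action of `P` on `T` is `K`-acylindrical: no nontrivial element fixes two vertices at
distance at least `K`. -/
def IsAcylindrical (P : Type*) [Group P] [MulAction P V] (T : SimpleGraph V) (K : ℕ) : Prop :=
  ∀ (f : P) (v w : V), f • v = v → f • w = w → K ≤ T.dist v w → f = 1

theorem ActsByAutomorphisms.dist_smul_smul (hact : ActsByAutomorphisms P T) (hT : T.Connected)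
    (g : P) (v w : V) : T.dist (g • v) (g • w) = T.dist v w := by
  have hle (g : P) (v w : V) : T.dist (g • v) (g • w) ≤ T.dist v w := by
    obtain ⟨q, hq⟩ := hT.exists_walk_length_eq_dist v w
    rw [← hq, ← q.length_map ⟨(g • ·), fun h => hact g h⟩]
    exact T.dist_le _
  refine le_antisymm (hle g v w) ?_
  simpa using hle g⁻¹ (g • v) (g • w)

theorem IsTranslationAt.ne_one {h : P} {p : V} (hp : IsTranslationAt T h p) : h ≠ 1 := by
  rintro rfl
  simpa using hp.1

section Connected

variable (hT : T.Connected) (hact : ActsByAutomorphisms P T)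

include hT hact

theorem IsTranslationAt.dist_zpow_smul {h : P} {p : V} (hp : IsTranslationAt T h p) (n : ℤ) :
    T.dist p (h ^ n • p) = n.natAbs * T.dist p (h • p) := by
  obtain ⟨n, rfl | rfl⟩ := n.eq_nat_or_neg
  · simpa using hp.2 n
  · rw [T.dist_comm, ← hact.dist_smul_smul hT (h ^ (n : ℤ)), ← mul_smul, ← zpow_add]
    simpa using hp.2 n

theorem IsTranslationAt.zpow {h : P} {p : V} (hp : IsTranslationAt T h p) {r : ℤ} (hr : r ≠ 0) :
    IsTranslationAt T (h ^ r) p := by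
  have hdist := hp.dist_zpow_smul hT hact
  refine ⟨?_, fun n => ?_⟩
  · rw [hdist]
    exact Nat.mul_pos (Int.natAbs_pos.2 hr) hp.1
  · rw [← zpow_natCast, ← zpow_mul, hdist, hdist, Int.natAbs_mul, Int.natAbs_natCast]
    ring

theorem dist_conj_smul (h f : P) (p : V) :
    T.dist (f⁻¹ • p) ((f⁻¹ * h * f) • f⁻¹ • p) = T.dist p (h • p) := by
  rw [mul_smul, smul_inv_smul, mul_smul, hact.dist_smul_smul hT]

theorem IsTranslationAt.conj {h : P} {p : V} (hp : IsTranslationAt T h p) (f : P) :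
    IsTranslationAt T (f⁻¹ * h * f) (f⁻¹ • p) := by
  refine ⟨by rw [dist_conj_smul hT hact]; exact hp.1, fun n => ?_⟩
  have hpow := conj_pow (a := f⁻¹) (b := h) (i := n)
  rw [inv_inv] at hpow
  rw [hpow, dist_conj_smul hT hact, dist_conj_smul hT hact, hp.2]

theorem IsTranslationAt.dist_smul_eq {h : P} {p q : V} (hp : IsTranslationAt T h p)
    (hq : IsTranslationAt T h q) : T.dist p (h • p) = T.dist q (h • q) := by
  have dist_smul_le {p q : V} (hp : IsTranslationAt T h p) (hq : IsTranslationAt T h q) :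
      T.dist p (h • p) ≤ T.dist q (h • q) := by
    by_contra! hlt
    obtain ⟨n, hn⟩ : ∃ n, 2 * T.dist p q < n := exists_gt _
    have hpn := hp.2 n
    have hqn := hq.2 n
    have hpq := hact.dist_smul_smul hT (h ^ n) p q
    have := hT.dist_triangle (u := p) (v := q) (w := h ^ n • p)
    have := hT.dist_triangle (u := q) (v := h ^ n • q) (w := h ^ n • p)
    have := Nat.mul_le_mul_left n hlt
    rw [T.dist_comm] at hpq
    rw [Nat.mul_succ] at this
    omega
  exact le_antisymm (dist_smul_le hp hq) (dist_smul_le hq hp)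

theorem IsTranslationAt.abs_eq_abs_of_conj {h : P} {p : V} (hp : IsTranslationAt T h p) {f : P}
    {r s : ℤ} (hr : r ≠ 0) (hs : s ≠ 0) (hf : f⁻¹ * h ^ r * f = h ^ s) : |r| = |s| := by
  have hlength := ((hp.zpow hT hact hr).conj hT hact f).dist_smul_eq hT hact
    (hf ▸ hp.zpow hT hact hs)
  rw [dist_conj_smul hT hact, hf, hp.dist_zpow_smul hT hact, hp.dist_zpow_smul hT hact] at hlength
  rw [Int.abs_eq_natAbs, Int.abs_eq_natAbs, Nat.eq_of_mul_eq_mul_right hp.1 hlength]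

end Connected

section Tree

variable (hT : T.IsTree) (hact : ActsByAutomorphisms P T)

include hT hact

theorem smul_eq_of_dist_eq_dist_add_dist {f : P} {v w x : V} (hv : f • v = v) (hw : f • w = w)
    (hx : T.dist v w = T.dist v x + T.dist x w) : f • x = x := by
  have hfv := hact.dist_smul_smul hT.connected f v x
  have hfw := hact.dist_smul_smul hT.connected f x w
  rw [hv] at hfv
  rw [hw] at hfw
  refine (hT.connected.dist_eq_zero_iff.1 ?_).symm
  have := dist_add_dist_le_or_le hT v w x (f • x)
  grind [SimpleGraph.dist_comm]

theorem isTranslationAt_of_dist_sq {h : P} {p : V} (hpos : 0 < T.dist p (h • p))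
    (hsq : T.dist p (h ^ 2 • p) = 2 * T.dist p (h • p)) : IsTranslationAt T h p := by
  refine ⟨hpos, fun n => ?_⟩
  induction n using Nat.strong_induction_on with | _ n ih => ?_
  match n with
  | 0 => simp
  | 1 => simp
  | 2 => exact hsq
  | n + 3 =>
    have shift (m : ℕ) : T.dist (h • p) (h ^ (m + 1) • p) = T.dist p (h ^ m • p) := by
      rw [pow_succ', mul_smul, hact.dist_smul_smul hT.connected]
    have hstep : T.dist (h ^ (n + 2) • p) (h ^ (n + 3) • p) = T.dist p (h • p) := by
      rw [pow_succ h (n + 2), mul_smul, hact.dist_smul_smul hT.connected]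
    have h₁ := ih (n + 1) (by omega)
    have h₂ := ih (n + 2) (by omega)
    have htri := hT.connected.dist_triangle (u := p) (v := h ^ (n + 2) • p) (w := h ^ (n + 3) • p)
    have hfour := dist_add_dist_le_or_le hT p (h ^ (n + 2) • p) (h • p) (h ^ (n + 3) • p)
    have hs₁ : T.dist (h • p) (h ^ (n + 2) • p) = T.dist p (h ^ (n + 1) • p) := shift (n + 1)
    have hs₂ : T.dist (h • p) (h ^ (n + 3) • p) = T.dist p (h ^ (n + 2) • p) := shift (n + 2)
    rw [T.dist_comm (u := h ^ (n + 2) • p) (v := h • p)] at hfour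
    push_cast [add_mul] at h₁ h₂ ⊢
    omega

theorem exists_smul_eq_or_isTranslationAt {h : P}
    (hinv : ∀ v w : V, T.Adj v w → h • v = w → h • w ≠ v) :
    (∃ v : V, h • v = v) ∨ ∃ p, IsTranslationAt T h p := by
  refine or_iff_not_imp_left.2 fun hfix => ?_
  have := hT.connected.nonempty
  have hdist := hact.dist_smul_smul hT.connected h
  obtain ⟨p, hmin⟩ : ∃ p : V, ∀ v, T.dist p (h • p) ≤ T.dist v (h • v) :=
    ⟨_, fun v => Function.argmin_le (fun v => T.dist v (h • v)) v⟩
  have hne : p ≠ h • p := fun hp => hfix ⟨p, hp.symm⟩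
  obtain ⟨q, hadj, hq⟩ := exists_adj_dist_eq_add_one hT.connected hne
  rw [T.dist_comm (v := p)] at hq
  refine ⟨p, isTranslationAt_of_dist_sq hT hact (by omega) ?_⟩
  -- If the path `p, q, …, h • p, h • q, …, h ^ 2 • p` backtracks at `h • p`, then `h` moves `q`
  -- less than `p`, unless it inverts the edge from `p` to `q`.
  rcases hT.dist_eq_dist_add_one_of_adj p (hact h hadj) with hback | hforth
  · have hpq := SimpleGraph.dist_eq_one_iff_adj.2 hadj
    have hhpq : T.dist (h • q) (h • p) = 1 := by rw [hdist, T.dist_comm, hpq]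
    have hqq : T.dist (h • q) q = T.dist (h • q) p + 1 := by
      have := hmin q
      have := hT.connected.dist_triangle (u := q) (v := p) (w := h • q)
      grind [SimpleGraph.dist_comm]
    have := dist_eq_dist_add_dist_of_adj hT hadj hqq (by rw [T.dist_comm, hq])
    exact absurd (hT.connected.dist_eq_zero_iff.1 (by omega))
      (hinv p q hadj (hT.connected.dist_eq_zero_iff.1 (by omega)))
  · have hhq : T.dist (h ^ 2 • p) (h • p) = T.dist (h ^ 2 • p) (h • q) + 1 := by
      rw [pow_two, mul_smul, hdist, hdist, T.dist_comm, hq, T.dist_comm]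
    have := dist_eq_dist_add_dist_of_adj hT (hact h hadj) hforth hhq
    rw [this, pow_two, mul_smul, hdist]
    omega

theorem dist_add_dist_eq_of_commute {k f g : P} {p : V} (hp : IsTranslationAt T k p)
    (hg : Commute k g) {n : ℕ} (hn : T.dist p (f • p) + T.dist p (g • p) < n) :
    n * T.dist p (k • p) + T.dist p (k ^ n • (g * f) • p) =
      T.dist p (k ^ n • g • p) + T.dist p (k ^ n • f • p) := by
  have hdist := hact.dist_smul_smul (V := V) hT.connected
  have hbase : T.dist (g • p) (k ^ n • g • p) = n * T.dist p (k • p) := by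
    rw [← mul_smul, (hg.pow_left n).eq, mul_smul, hdist, hp.2]
  have hgf : T.dist (g • p) (k ^ n • (g * f) • p) = T.dist p (k ^ n • f • p) := by
    rw [← mul_smul, ← mul_assoc, (hg.pow_left n).eq, mul_assoc, mul_smul, mul_smul, hdist]
  have hgf' : T.dist (k ^ n • g • p) (k ^ n • (g * f) • p) = T.dist p (f • p) := by
    rw [hdist, mul_smul, hdist]
  have := Nat.le_mul_of_pos_right n hp.1
  have h₁ := dist_add_dist_le_or_le hT (g • p) (k ^ n • g • p) p (k ^ n • (g * f) • p)
  have h₂ := dist_add_dist_le_or_le hT (g • p) (k ^ n • (g * f) • p) p (k ^ n • g • p)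
  grind [SimpleGraph.dist_comm]

open Filter in
/-- `c` is the value at `f • p` of the Busemann function of the end towards which `k⁻¹`
translates. -/
theorem exists_eventually_dist_eq {k f : P} {p : V} (hp : IsTranslationAt T k p) :
    ∃ c : ℤ, ∀ᶠ n : ℕ in atTop,
      (T.dist p (k ^ n • f • p) : ℤ) = n * T.dist p (k • p) + c := by
  obtain ⟨N, hN⟩ : ∃ N, T.dist p (f • p) + T.dist p (k • p) < N := exists_gt _
  refine ⟨T.dist p (k ^ N • f • p) - N * T.dist p (k • p), eventually_atTop.2 ⟨N, fun n hn => ?_⟩⟩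
  induction n, hn using Nat.le_induction with
  | base => ring
  | succ n hn ih =>
    have hstep := dist_add_dist_eq_of_commute hT hact hp (Commute.refl k) (f := f) (hN.trans_le hn)
    have hsucc := hp.2 (n + 1)
    rw [← mul_smul, ← mul_assoc, ← pow_succ, mul_smul, ← mul_smul (k ^ n) k, ← pow_succ, hsucc]
      at hstep
    push_cast at hstep ⊢
    linarith

theorem smul_eq_of_dist_pow_smul_eq {k f : P} {p : V} (hp : IsTranslationAt T k p)
    (hf : Commute k f) {n : ℕ} (hn : T.dist p (k ^ n • f • p) = n * T.dist p (k • p))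
    (hn' : T.dist p (k ^ n • f⁻¹ • p) = n * T.dist p (k • p)) : f • p = p := by
  have hdist := hact.dist_smul_smul (V := V) hT.connected
  have hback : T.dist (k ^ n • f • p) (k ^ (2 * n) • p) = n * T.dist p (k • p) := by
    rw [two_mul, pow_add, mul_smul, hdist, ← hdist f⁻¹, inv_smul_smul, ← mul_smul,
      ((hf.pow_left n).inv_right).symm.eq, mul_smul, hn']
  have htotal := hp.2 (2 * n)
  have hmid : T.dist (k ^ n • p) (k ^ (2 * n) • p) = n * T.dist p (k • p) := by
    rw [two_mul, pow_add, mul_smul, hdist, hp.2]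
  have hzero : T.dist (k ^ n • p) (k ^ n • f • p) = 0 := by
    have := dist_add_dist_le_or_le hT p (k ^ (2 * n) • p) (k ^ n • p) (k ^ n • f • p)
    grind [SimpleGraph.dist_comm, hp.2 n]
  rw [hdist] at hzero
  exact (hT.connected.dist_eq_zero_iff.1 hzero).symm

open Filter in
theorem exists_centralizer_monoidHom {k : P} {p : V} (hp : IsTranslationAt T k p) :
    ∃ c : Subgroup.centralizer ({k} : Set P) →* Multiplicative ℤ,
      ∀ f, c f = 1 → (f : P) • p = p := by
  choose c hc using fun f : Subgroup.centralizer ({k} : Set P) =>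
    exists_eventually_dist_eq hT hact (f := f) hp
  have hcomm (f : Subgroup.centralizer ({k} : Set P)) : Commute k f :=
    (Subgroup.mem_centralizer_singleton_iff.1 f.2).symm
  have map_mul (g f) : c (g * f) = c g + c f := by
    obtain ⟨n, hgf, hg, hf, hn⟩ :=
      ((hc (g * f)).and ((hc g).and ((hc f).and (eventually_gt_atTop
        (T.dist p ((f : P) • p) + T.dist p ((g : P) • p)))))).exists
    have := dist_add_dist_eq_of_commute hT hact hp (hcomm g) hn
    zify at this
    rw [← Subgroup.coe_mul] at this
    linarith
  let φ : Subgroup.centralizer ({k} : Set P) →* Multiplicative ℤ :=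
    MonoidHom.mk' (fun f => .ofAdd (c f)) map_mul
  refine ⟨φ, fun f hf => ?_⟩
  have hcf : c f = 0 := hf
  have hcf' : c f⁻¹ = 0 := by
    have : φ f⁻¹ = 1 := by rw [map_inv, hf, inv_one]
    exact this
  obtain ⟨n, hn, hn'⟩ := ((hc f).and (hc f⁻¹)).exists
  rw [hcf, add_zero] at hn
  rw [hcf', add_zero] at hn'
  exact smul_eq_of_dist_pow_smul_eq hT hact hp (hcomm f) (mod_cast hn) (mod_cast hn')

theorem exists_injective_centralizer {K : ℕ} (hacyl : IsAcylindrical P T K) {k : P} {p : V}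
    (hp : IsTranslationAt T k p) :
    ∃ c : Subgroup.centralizer ({k} : Set P) →* Multiplicative ℤ, Function.Injective c := by
  obtain ⟨c, hc⟩ := exists_centralizer_monoidHom hT hact hp
  refine ⟨c, (injective_iff_map_eq_one c).2 fun f hf => Subtype.ext ?_⟩
  have hfp := hc f hf
  have hcomm : Commute (f : P) (k ^ K) :=
    Commute.pow_right (Subgroup.mem_centralizer_singleton_iff.1 f.2) K
  refine hacyl f p (k ^ K • p) hfp ?_ ?_
  · rw [← mul_smul, hcomm.eq, mul_smul, hfp]
  · rw [hp.2]
    exact Nat.le_mul_of_pos_right K hp.1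

end Tree

end TreeAction

section ClassD

variable {P : Type*} [Group P]

/-- The conditions defining the class `𝒟`, for a single element `g`. -/
def ClassDAt (g : P) : Prop :=
  (∀ (h : P) (r : ℤ), r ≠ 0 → g ^ r = h ^ r → g = h) ∧
    (NoPrimeRoot g →
      (∃ f : Subgroup.centralizer ({g} : Set P) →* Multiplicative ℚ, Function.Injective f) ∧
      (∀ r : ℤ, r ≠ 0 →
        Subgroup.centralizer ({g ^ r} : Set P) = Subgroup.centralizer ({g} : Set P)) ∧
      ∀ (f : P) (r s : ℤ), r ≠ 0 → s ≠ 0 → f⁻¹ * g ^ r * f = g ^ s → r = s)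

/-- `f` commensurates the cyclic subgroup `⟨h⟩`: it conjugates some nontrivial power of `h` to
another one. For `h` of infinite order these `f` form the commensurator of `⟨h⟩`. -/
def Commensurates (f h : P) : Prop :=
  ∃ r s : ℤ, r ≠ 0 ∧ s ≠ 0 ∧ f⁻¹ * h ^ r * f = h ^ s

theorem NoPrimeRoot.ne_one {g : P} (hg : NoPrimeRoot g) : g ≠ 1 := by
  rintro rfl
  obtain ⟨p, -, hroot⟩ := hg
  exact hroot ⟨1, one_pow p⟩

theorem NoPrimeRoot.of_map {Q : Type*} [Group Q] (ι : P →* Q) {g : P} (hg : NoPrimeRoot (ι g)) :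
    NoPrimeRoot g := by
  obtain ⟨p, hp, hroot⟩ := hg
  refine ⟨p, hp, ?_⟩
  rintro ⟨h, rfl⟩
  exact hroot ⟨ι h, (map_pow ι h p).symm⟩

theorem classD_of_classDAt (hP : ∀ g : P, g ≠ 1 → ClassDAt g) : ClassD P := by
  refine ⟨fun g h r hr hgh => ?_, fun g hg => ((hP g hg.ne_one).2 hg).1,
    fun g hg => ((hP g hg.ne_one).2 hg).2.1, fun g hg => ((hP g hg.ne_one).2 hg).2.2⟩
  by_cases hg : g = 1
  · by_cases hh : h = 1
    · rw [hg, hh]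
    · exact ((hP h hh).1 g r hr hgh.symm).symm
  · exact (hP g hg).1 h r hr hgh

theorem ClassD.eq_one_of_zpow_eq_one (hP : ClassD P) {g : P} {r : ℤ} (hr : r ≠ 0)
    (hg : g ^ r = 1) : g = 1 :=
  hP.1 g 1 r hr (by rw [hg, one_zpow])

theorem inv_mul_mul_eq_iff_commute {f g : P} : f⁻¹ * g * f = g ↔ Commute f g := by
  rw [mul_assoc, inv_mul_eq_iff_eq_mul]
  exact eq_comm

theorem commensurates_of_commute {f h : P} {r : ℤ} (hr : r ≠ 0) (hf : Commute f (h ^ r)) :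
    Commensurates f h :=
  ⟨r, r, hr, hr, inv_mul_mul_eq_iff_commute.2 hf⟩

theorem centralizer_map_zpow {K : Type*} [Group K] (ι : K →* P) (hι : Function.Injective ι) {k : K}
    (hcomm : ∀ f, Commensurates f (ι k) → f ∈ ι.range) {r : ℤ} (hr : r ≠ 0) :
    Subgroup.centralizer ({ι k ^ r} : Set P) = (Subgroup.centralizer ({k ^ r} : Set K)).map ι := by
  ext f
  simp only [Subgroup.mem_map, Subgroup.mem_centralizer_singleton_iff]
  refine ⟨fun hf => ?_, ?_⟩
  · obtain ⟨l, rfl⟩ := hcomm f (commensurates_of_commute hr hf)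
    exact ⟨l, hι (by simpa using hf), rfl⟩
  · rintro ⟨l, hl, rfl⟩
    simpa using congrArg ι hl

theorem ClassD.classDAt_map {K : Type*} [Group K] (hK : ClassD K) (ι : K →* P)
    (hι : Function.Injective ι) {k : K} (hcomm : ∀ f, Commensurates f (ι k) → f ∈ ι.range) :
    ClassDAt (ι k) := by
  have hcent {r : ℤ} (hr : r ≠ 0) := centralizer_map_zpow ι hι hcomm hr
  have hcent_one := hcent one_ne_zero
  rw [zpow_one, zpow_one] at hcent_one
  refine ⟨fun g r hr hg => ?_, fun hk => ?_⟩
  · obtain ⟨l, rfl⟩ := hcomm g (commensurates_of_commute hr (hg ▸ Commute.self_zpow g r))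
    rw [hK.1 k l r hr (hι (by simpa using hg))]
  replace hk := hk.of_map
  refine ⟨?_, fun r hr => ?_, fun f r s hr hs hf => ?_⟩
  · obtain ⟨φ, hφ⟩ := hK.2.1 k hk
    rw [hcent_one]
    exact ⟨φ.comp ((Subgroup.centralizer {k}).equivMapOfInjective ι hι).symm.toMonoidHom,
      hφ.comp (MulEquiv.injective _)⟩
  · rw [hcent hr, hcent_one, hK.2.2.1 k hk r hr]
  · obtain ⟨l, rfl⟩ := hcomm f ⟨r, s, hr, hs, hf⟩
    exact hK.2.2.2 k hk l r s hr hs (hι (by simpa using hf))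

theorem ClassD.of_mulEquiv {K : Type*} [Group K] (hK : ClassD K) (e : K ≃* P) : ClassD P :=
  classD_of_classDAt fun g _ => e.apply_symm_apply g ▸
    hK.classDAt_map e.toMonoidHom e.injective fun f _ => e.surjective f

theorem classD_of_injective_rat (φ : P →* Multiplicative ℚ) (hφ : Function.Injective φ) :
    ClassD P := by
  have hcomm (a b : P) : Commute a b := hφ (by rw [map_mul, map_mul, mul_comm])
  have : IsMulTorsionFree P := hφ.isMulTorsionFree φ
  refine ⟨fun g h r hr hgh => zpow_left_injective hr hgh, fun g _ =>
    ⟨φ.comp (Subgroup.subtype _), hφ.comp Subtype.val_injective⟩, fun g _ r _ => ?_,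
    fun g hg f r s _ _ hf => ?_⟩
  · ext f
    simp only [Subgroup.mem_centralizer_singleton_iff, (hcomm f _).eq]
  · rw [inv_mul_mul_eq_iff_commute.2 (hcomm f _)] at hf
    refine sub_eq_zero.1 ((IsMulTorsionFree.zpow_eq_one_iff_right hg.ne_one).1 ?_)
    rw [zpow_sub, mul_inv_eq_one, hf]

theorem classD_of_injective_int (φ : P →* Multiplicative ℤ) (hφ : Function.Injective φ) :
    ClassD P := by
  have hcast : Function.Injective (AddMonoidHom.toMultiplicative (Int.castAddHom ℚ)) :=
    fun _ _ h => Int.cast_injective (α := ℚ) h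
  exact classD_of_injective_rat ((AddMonoidHom.toMultiplicative (Int.castAddHom ℚ)).comp φ)
    (hcast.comp hφ)

theorem commute_of_mem_centralizer_of_injective {h f g : P}
    (hcent : ∃ φ : Subgroup.centralizer ({h} : Set P) →* Multiplicative ℤ, Function.Injective φ)
    (hf : Commute f h) (hg : Commute g h) : Commute f g := by
  obtain ⟨φ, hφ⟩ := hcent
  let f' : Subgroup.centralizer ({h} : Set P) := ⟨f, Subgroup.mem_centralizer_singleton_iff.2 hf⟩
  let g' : Subgroup.centralizer ({h} : Set P) := ⟨g, Subgroup.mem_centralizer_singleton_iff.2 hg⟩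
  have : f' * g' = g' * f' := hφ (by rw [map_mul, map_mul, mul_comm])
  exact congrArg Subtype.val this

theorem exists_zpow_eq_zpow_of_injective {h f : P} (hh : h ≠ 1)
    (hcent : ∃ φ : Subgroup.centralizer ({h} : Set P) →* Multiplicative ℤ, Function.Injective φ)
    (hf : Commute f h) : ∃ a b : ℤ, a ≠ 0 ∧ f ^ a = h ^ b := by
  obtain ⟨φ, hφ⟩ := hcent
  let f' : Subgroup.centralizer ({h} : Set P) := ⟨f, Subgroup.mem_centralizer_singleton_iff.2 hf⟩
  let h' : Subgroup.centralizer ({h} : Set P) := ⟨h, Subgroup.mem_centralizer_singleton_iff.2 rfl⟩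
  refine ⟨(φ h').toAdd, (φ f').toAdd, fun h0 => hh ?_, ?_⟩
  · have : h' = 1 := hφ ((toAdd_eq_zero.1 h0).trans (map_one φ).symm)
    exact congrArg Subtype.val this
  · have : f' ^ (φ h').toAdd = h' ^ (φ f').toAdd := hφ (Multiplicative.toAdd.injective (by
      rw [map_zpow φ, map_zpow φ, toAdd_zpow, toAdd_zpow, smul_eq_mul, smul_eq_mul, mul_comm]))
    exact congrArg Subtype.val this

theorem commute_sq_of_inv_mul_mul_eq_inv {f g : P} (hf : f⁻¹ * g * f = g⁻¹) :
    Commute (f ^ 2) g := by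
  have hf' : f⁻¹ * g⁻¹ * f = g := by simpa [mul_assoc] using congrArg (·⁻¹) hf
  refine inv_mul_mul_eq_iff_commute.1 ?_
  calc (f ^ 2)⁻¹ * g * f ^ 2 = f⁻¹ * (f⁻¹ * g * f) * f := by
        simp only [pow_two, mul_inv_rev, mul_assoc]
    _ = g := by rw [hf, hf']

theorem classDAt_of_injective_centralizer_zpow {h : P} (hh : h ≠ 1)
    (htf : ∀ (f : P) (r : ℤ), r ≠ 0 → f ^ r = 1 → f = 1)
    (hcent : ∀ r : ℤ, r ≠ 0 → ∃ φ : Subgroup.centralizer ({h ^ r} : Set P) →* Multiplicative ℤ,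
      Function.Injective φ)
    (habs : ∀ (f : P) (r s : ℤ), r ≠ 0 → s ≠ 0 → f⁻¹ * h ^ r * f = h ^ s → |r| = |s|) :
    ClassDAt h := by
  have hcomm {r : ℤ} (hr : r ≠ 0) {f : P} (hf : Commute f (h ^ r)) : Commute f h :=
    commute_of_mem_centralizer_of_injective (hcent r hr) hf (Commute.self_zpow h r)
  have hcent_one : ∃ φ : Subgroup.centralizer ({h} : Set P) →* Multiplicative ℤ,
      Function.Injective φ := zpow_one h ▸ hcent 1 one_ne_zero
  obtain ⟨φ, hφ⟩ := hcent_one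
  refine (classD_of_injective_int φ hφ).classDAt_map (Subgroup.subtype _) Subtype.val_injective
    (k := ⟨h, Subgroup.mem_centralizer_singleton_iff.2 rfl⟩) fun f ⟨r, s, hr, hs, hf⟩ => ?_
  rw [Subgroup.range_subtype, Subgroup.mem_centralizer_singleton_iff]
  dsimp only [Subgroup.subtype_apply] at hf
  rcases abs_eq_abs.1 (habs f r s hr hs hf) with rfl | rfl
  · exact hcomm hr (inv_mul_mul_eq_iff_commute.1 hf)
  · -- `f ^ 2` commutes with `h`, so `f` commutes with a nontrivial power of `h`.
    have hsq : Commute (f ^ 2) h :=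
      hcomm hr (commute_sq_of_inv_mul_mul_eq_inv (by rw [hf, zpow_neg, inv_inv]))
    obtain ⟨a, b, ha, hab⟩ := exists_zpow_eq_zpow_of_injective hh ⟨φ, hφ⟩ hsq
    by_cases hb : b = 0
    · rw [hb, zpow_zero] at hab
      have hf2 : f ^ (2 : ℤ) = 1 := mod_cast htf _ a ha hab
      rw [htf f 2 two_ne_zero hf2]
      exact Commute.one_left h
    · refine hcomm hb ?_
      rw [← hab]
      exact (Commute.self_pow f 2).zpow_right a

end ClassD

section BipartiteTreeAction

variable {V P : Type*} {T : SimpleGraph V} [Group P] [MulAction P V] {S : Set V}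

/-- `S` is one of the two classes of a `P`-invariant bipartition of the vertices of `T`. -/
structure IsInvariantBipartition (P : Type*) [Group P] [MulAction P V] (T : SimpleGraph V)
    (S : Set V) : Prop where
  smul_mem_iff (g : P) (v : V) : g • v ∈ S ↔ v ∈ S
  mem_iff_notMem_of_adj ⦃v w : V⦄ : T.Adj v w → (v ∈ S ↔ w ∉ S)

/-- Stabilizers of edges are malnormal in the stabilizers of the vertices outside `S`: a nontrivial
element fixes at most one edge at each of these vertices. -/
def IsMalnormalOutside (P : Type*) [Group P] [MulAction P V] (T : SimpleGraph V)
    (S : Set V) : Prop :=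
  ∀ f : P, f ≠ 1 → ∀ a b b' : V, a ∉ S → T.Adj a b → T.Adj a b' → f • a = a → f • b = b →
    f • b' = b' → b = b'

theorem zpow_smul_eq_of_smul_eq {h : P} {v : V} (hv : h • v = v) (r : ℤ) : h ^ r • v = v :=
  (MulAction.stabilizer P v).zpow_mem hv r

theorem zpow_smul_smul_eq_of_conj {h : P} {v : V} (hv : h • v = v) {f : P} {r s : ℤ}
    (hf : f⁻¹ * h ^ r * f = h ^ s) : h ^ r • f • v = f • v := by
  have hs := zpow_smul_eq_of_smul_eq hv s
  rwa [← hf, mul_smul, mul_smul, inv_smul_eq_iff] at hs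

variable (hT : T.IsTree) (hact : ActsByAutomorphisms P T) (hS : IsInvariantBipartition P T S)

include hT hact hS

theorem exists_mem_smul_eq_of_smul_eq {f : P} {v w : V} (hv : f • v = v) (hw : f • w = w)
    (hvw : v ≠ w) : ∃ b ∈ S, f • b = b ∧ T.dist v b ≤ 1 := by
  by_cases hvS : v ∈ S
  · exact ⟨v, hvS, hv, by simp⟩
  obtain ⟨b, hadj, hb⟩ := exists_adj_dist_eq_add_one hT.connected hvw
  have hvb := SimpleGraph.dist_eq_one_iff_adj.2 hadj
  refine ⟨b, not_not.1 fun hbS => hvS ((hS.mem_iff_notMem_of_adj hadj).2 hbS), ?_, hvb.le⟩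
  refine smul_eq_of_dist_eq_dist_add_dist hT hact hv hw ?_
  rw [T.dist_comm, hb, hvb, T.dist_comm, add_comm]

theorem exists_smul_eq_or_isTranslationAt_of_bipartition (h : P) :
    (∃ v : V, h • v = v) ∨ ∃ p, IsTranslationAt T h p :=
  exists_smul_eq_or_isTranslationAt hT hact fun v _ hadj hvw _ =>
    iff_not_self ((hS.smul_mem_iff h v).trans (hvw ▸ hS.mem_iff_notMem_of_adj hadj))

theorem eq_one_of_zpow_eq_one_of_stabilizer (hstab : ∀ v : V, ClassD (MulAction.stabilizer P v))
    (h : P) (r : ℤ) (hr : r ≠ 0) (hhr : h ^ r = 1) : h = 1 := by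
  rcases exists_smul_eq_or_isTranslationAt_of_bipartition hT hact hS h with ⟨v, hv⟩ | ⟨p, hp⟩
  · exact congrArg Subtype.val ((hstab v).eq_one_of_zpow_eq_one (g := ⟨h, hv⟩) hr (Subtype.ext hhr))
  · exact absurd hhr (hp.zpow hT.connected hact hr).ne_one

variable (hmal : IsMalnormalOutside P T S)

include hmal

theorem eq_of_mem_of_smul_eq {f : P} (hf : f ≠ 1) {b b' : V} (hbS : b ∈ S) (hbS' : b' ∈ S)
    (hb : f • b = b) (hb' : f • b' = b') : b = b' := by
  by_contra hne
  obtain ⟨a, hba, ha⟩ := exists_adj_dist_eq_add_one hT.connected hne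
  have haS : a ∉ S := (hS.mem_iff_notMem_of_adj hba).1 hbS
  obtain ⟨b₁, hab₁, hb₁⟩ := exists_adj_dist_eq_add_one hT.connected (x := a) (y := b')
    fun h => haS (h ▸ hbS')
  have hfa : f • a = a := smul_eq_of_dist_eq_dist_add_dist hT hact hb hb' (by
    grind [SimpleGraph.dist_comm, SimpleGraph.dist_eq_one_iff_adj])
  have hfb₁ : f • b₁ = b₁ := smul_eq_of_dist_eq_dist_add_dist hT hact hfa hb' (by
    grind [SimpleGraph.dist_comm, SimpleGraph.dist_eq_one_iff_adj])
  obtain rfl := hmal f hf a b b₁ haS hba.symm hab₁ hfa hb hfb₁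
  omega

theorem isAcylindrical_three : IsAcylindrical P T 3 := by
  intro f v w hv hw hvw
  by_contra hf
  have hne : v ≠ w := by
    rintro rfl
    simp at hvw
  obtain ⟨b, hbS, hb, hvb⟩ := exists_mem_smul_eq_of_smul_eq hT hact hS hv hw hne
  obtain ⟨b', hbS', hb', hwb'⟩ := exists_mem_smul_eq_of_smul_eq hT hact hS hw hv hne.symm
  obtain rfl := eq_of_mem_of_smul_eq hT hact hS hmal hf hbS hbS' hb hb'
  have := hT.connected.dist_triangle (u := v) (v := b) (w := w)
  rw [T.dist_comm (u := b)] at this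
  omega

theorem classDAt_of_isTranslationAt (htf : ∀ (f : P) (r : ℤ), r ≠ 0 → f ^ r = 1 → f = 1) {h : P}
    {p : V} (hp : IsTranslationAt T h p) : ClassDAt h :=
  classDAt_of_injective_centralizer_zpow hp.ne_one htf
    (fun _ hr => exists_injective_centralizer hT hact (isAcylindrical_three hT hact hS hmal)
      (hp.zpow hT.connected hact hr))
    fun _ _ _ hr hs hf => hp.abs_eq_abs_of_conj hT.connected hact hr hs hf

theorem smul_eq_of_commensurates {h : P} (hh : ∀ r : ℤ, r ≠ 0 → h ^ r ≠ 1) {v : V}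
    (hv : h • v = v) (hvS : v ∈ S ∨ ∀ b ∈ S, h • b ≠ b) {f : P} (hf : Commensurates f h) :
    f • v = v := by
  obtain ⟨r, s, hr, -, hf⟩ := hf
  have hunique := @eq_of_mem_of_smul_eq _ _ _ _ _ _ hT hact hS hmal _ (hh r hr)
  have hrv := zpow_smul_eq_of_smul_eq hv r
  have hrf := zpow_smul_smul_eq_of_conj hv hf
  rcases hvS with hvS | hnone
  · exact hunique ((hS.smul_mem_iff f v).2 hvS) hvS hrf hrv
  · by_contra hne
    obtain ⟨b, hbS, hb, -⟩ := exists_mem_smul_eq_of_smul_eq hT hact hS hrf hrv hne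
    refine hnone b hbS (hunique ((hS.smul_mem_iff h b).2 hbS) hbS ?_ hb)
    rw [← mul_smul, (Commute.self_zpow h r).symm.eq, mul_smul, hb]

theorem classD_of_classD_stabilizer (hstab : ∀ v : V, ClassD (MulAction.stabilizer P v)) :
    ClassD P := by
  have htf := eq_one_of_zpow_eq_one_of_stabilizer hT hact hS hstab
  refine classD_of_classDAt fun h hh => ?_
  have classDAt_of_smul_eq {v : V} (hv : h • v = v) (hvS : v ∈ S ∨ ∀ b ∈ S, h • b ≠ b) :
      ClassDAt h := by
    refine (hstab v).classDAt_map (Subgroup.subtype _) Subtype.val_injective (k := ⟨h, hv⟩)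
      fun f hf => ?_
    rw [Subgroup.range_subtype]
    exact smul_eq_of_commensurates hT hact hS hmal (fun r hr hhr => hh (htf h r hr hhr)) hv hvS hf
  by_cases hfix : ∃ b ∈ S, h • b = b
  · obtain ⟨b, hbS, hb⟩ := hfix
    exact classDAt_of_smul_eq hb (.inl hbS)
  push Not at hfix
  rcases exists_smul_eq_or_isTranslationAt_of_bipartition hT hact hS h with ⟨v, hv⟩ | ⟨p, hp⟩
  · exact classDAt_of_smul_eq hv (.inr hfix)
  · exact classDAt_of_isTranslationAt hT hact hS hmal htf hp

end BipartiteTreeAction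

/-- A subgroup `K` is malnormal if it meets its conjugate by any element outside `K` trivially. -/
def IsMalnormal {G : Type*} [Group G] (K : Subgroup G) : Prop :=
  ∀ g h : G, h ∈ K → h ≠ 1 → g⁻¹ * h * g ∈ K → g ∈ K

section CosetGraph

variable {P : Type*} [Group P] {A B : Subgroup P}

/-- The bipartite graph on the left cosets of `A` and of `B` with an edge joining `g A` to `g B` for
each `g`. It is the Bass–Serre tree if `P` is the free product of `A` and `B` amalgamated along
`A ⊓ B`. -/
def cosetGraph (A B : Subgroup P) : SimpleGraph ((P ⧸ A) ⊕ (P ⧸ B)) :=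
  SimpleGraph.fromRel fun v w => ∃ g : P, v = .inl g ∧ w = .inr g

theorem cosetGraph_adj_iff {v w : (P ⧸ A) ⊕ (P ⧸ B)} : (cosetGraph A B).Adj v w ↔
    ∃ g : P, v = .inl g ∧ w = .inr g ∨ v = .inr g ∧ w = .inl g := by
  simp only [cosetGraph, SimpleGraph.fromRel_adj, exists_or]
  refine ⟨fun ⟨_, h⟩ => h.imp_right fun ⟨g, hw, hv⟩ => ⟨g, hv, hw⟩, ?_⟩
  rintro (⟨g, rfl, rfl⟩ | ⟨g, rfl, rfl⟩)
  · exact ⟨Sum.inl_ne_inr, .inl ⟨g, rfl, rfl⟩⟩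
  · exact ⟨Sum.inr_ne_inl, .inr ⟨g, rfl, rfl⟩⟩

theorem cosetGraph_adj (g : P) : (cosetGraph A B).Adj (.inl g) (.inr g) :=
  cosetGraph_adj_iff.2 ⟨g, .inl ⟨rfl, rfl⟩⟩

theorem exists_of_cosetGraph_adj_inl {g : P} {w : (P ⧸ A) ⊕ (P ⧸ B)}
    (h : (cosetGraph A B).Adj (.inl g) w) : ∃ a ∈ A, w = .inr ↑(g * a) := by
  obtain ⟨x, ⟨hx, rfl⟩ | ⟨hx, -⟩⟩ := cosetGraph_adj_iff.1 h
  · exact ⟨g⁻¹ * x, QuotientGroup.eq.1 (Sum.inl_injective hx), by rw [mul_inv_cancel_left]⟩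
  · exact absurd hx Sum.inl_ne_inr

theorem actsByAutomorphisms_cosetGraph : ActsByAutomorphisms P (cosetGraph A B) := by
  intro f v w h
  obtain ⟨g, ⟨rfl, rfl⟩ | ⟨rfl, rfl⟩⟩ := cosetGraph_adj_iff.1 h
  · exact cosetGraph_adj (f * g)
  · exact (cosetGraph_adj (f * g)).symm

theorem isInvariantBipartition_cosetGraph :
    IsInvariantBipartition P (cosetGraph A B) (Set.range Sum.inr) where
  smul_mem_iff g v := by cases v <;> simp
  mem_iff_notMem_of_adj v w h := by
    obtain ⟨g, ⟨rfl, rfl⟩ | ⟨rfl, rfl⟩⟩ := cosetGraph_adj_iff.1 h <;> simp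

theorem smul_coe_eq_iff {f g : P} : f • (g : P ⧸ A) = g ↔ g⁻¹ * f * g ∈ A := by
  rw [MulAction.Quotient.smul_coe, smul_eq_mul, eq_comm, QuotientGroup.eq, mul_assoc]

theorem isMalnormalOutside_cosetGraph (hmal : IsMalnormal (B.subgroupOf A)) :
    IsMalnormalOutside P (cosetGraph A B) (Set.range Sum.inr) := by
  intro f hf v w w' hv hw hw' hfv hfw hfw'
  obtain ⟨g, ⟨rfl, rfl⟩ | ⟨rfl, -⟩⟩ := cosetGraph_adj_iff.1 hw
  swap
  · exact absurd ⟨_, rfl⟩ hv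
  obtain ⟨a, ha, rfl⟩ := exists_of_cosetGraph_adj_inl hw'
  have hA := smul_coe_eq_iff.1 (Sum.inl_injective hfv)
  have hB := smul_coe_eq_iff.1 (Sum.inr_injective hfw)
  have hB' := smul_coe_eq_iff.1 (Sum.inr_injective hfw')
  have haB : a ∈ B := hmal ⟨a, ha⟩ ⟨g⁻¹ * f * g, hA⟩ hB
    (fun h => hf (by simpa [mul_assoc, inv_mul_eq_one] using congrArg Subtype.val h))
    (by simpa [Subgroup.mem_subgroupOf, mul_assoc] using hB')
  rw [QuotientGroup.mk_mul_of_mem g haB]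

theorem induction_of_sup_eq_top (hgen : A ⊔ B = ⊤) {motive : P → Prop} (one : motive 1)
    (left : ∀ a ∈ A, ∀ g, motive g → motive (a * g))
    (right : ∀ b ∈ B, ∀ g, motive g → motive (b * g)) (g : P) : motive g := by
  have hg : g ∈ Subgroup.closure ((A : Set P) ∪ B) := by
    rw [← Subgroup.sup_eq_closure, hgen]
    exact Subgroup.mem_top g
  induction hg using Subgroup.closure_induction_left with
  | one => exact one
  | mul_left s hs g _ ih => exact hs.elim (left s · g ih) (right s · g ih)
  | inv_mul_cancel s hs g _ ih =>
    exact hs.elim (fun h => left s⁻¹ (A.inv_mem h) g ih) fun h => right s⁻¹ (B.inv_mem h) g ih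

theorem connected_cosetGraph (hgen : A ⊔ B = ⊤) : (cosetGraph A B).Connected := by
  have smul_reachable (f : P) {v w} (h : (cosetGraph A B).Reachable v w) :
      (cosetGraph A B).Reachable (f • v) (f • w) :=
    h.map ⟨(f • ·), fun h => actsByAutomorphisms_cosetGraph f h⟩
  have reachable_inl (g : P) : (cosetGraph A B).Reachable (.inl ↑(1 : P)) (.inl g) := by
    induction g using induction_of_sup_eq_top hgen with
    | one => exact .rfl
    | left a ha g ih =>
      have h := smul_reachable a ih
      rwa [Sum.smul_inl, Sum.smul_inl, smul_coe_eq_iff.2 (by simpa using ha)] at h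
    | right b hb g ih =>
      have hb₁ : b • ((1 : P) : P ⧸ B) = (1 : P) := smul_coe_eq_iff.2 (by simpa using hb)
      have hadj := (actsByAutomorphisms_cosetGraph b (cosetGraph_adj (A := A) (B := B) 1)).symm
      rw [Sum.smul_inr, hb₁] at hadj
      exact ((cosetGraph_adj 1).reachable.trans hadj.reachable).trans (smul_reachable b ih)
  refine (SimpleGraph.connected_iff_exists_forall_reachable _).2 ⟨.inl ↑(1 : P), ?_⟩
  rintro (a | b)
  · induction a using QuotientGroup.induction_on with | _ g => exact reachable_inl g
  · induction b using QuotientGroup.induction_on with | _ g =>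
    exact (reachable_inl g).trans (cosetGraph_adj g).reachable

theorem isBridge_of_forall_adj_eq {V α : Type*} {T : SimpleGraph V} (σ : V → α) {u v : V}
    (hne : σ u ≠ σ v) (hσ : ∀ x y, T.Adj x y → s(x, y) ≠ s(u, v) → σ x = σ y) :
    T.IsBridge s(u, v) := by
  have eq_of_walk {x y : V} (p : T.Walk x y) (hp : s(u, v) ∉ p.edges) : σ x = σ y := by
    induction p with
    | nil => rfl
    | cons hadj q ih =>
      rw [SimpleGraph.Walk.edges_cons, List.mem_cons, not_or] at hp
      exact (hσ _ _ hadj (Ne.symm hp.1)).trans (ih hp.2)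
  exact SimpleGraph.isBridge_iff_forall_walk_mem_edges.2 fun p =>
    not_not.1 fun hp => hne (eq_of_walk p hp)

open scoped Classical in
/-- The permutation of two copies of `P ⧸ A ⊓ B` that exchanges the two trivial cosets. -/
noncomputable def swapTrivialCosets (A B : Subgroup P) :
    Equiv.Perm ((P ⧸ A ⊓ B) ⊕ (P ⧸ A ⊓ B)) :=
  Equiv.swap (.inl ↑(1 : P)) (.inr ↑(1 : P))

/-- `ρ` is an action of `P` on two copies of `P ⧸ A ⊓ B`, in which `A` acts by translations and `B`
acts by translations conjugated by `swapTrivialCosets`. Its existence forces the edges of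
`cosetGraph A B` to be bridges. -/
structure IsTwistedAction (A B : Subgroup P) (ρ : P →* Equiv.Perm ((P ⧸ A ⊓ B) ⊕ (P ⧸ A ⊓ B))) :
    Prop where
  apply_left ⦃a : P⦄ : a ∈ A → ρ a = MulAction.toPerm a
  apply_right ⦃b : P⦄ : b ∈ B →
    ρ b = swapTrivialCosets A B * MulAction.toPerm b * swapTrivialCosets A B

theorem swapTrivialCosets_apply_apply (w : (P ⧸ A ⊓ B) ⊕ (P ⧸ A ⊓ B)) :
    swapTrivialCosets A B (swapTrivialCosets A B w) = w := by
  classical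
  exact DFunLike.congr_fun (Equiv.swap_swap _ _) w

theorem commute_swapTrivialCosets_toPerm {c : P} (hc : c ∈ A ⊓ B) :
    Commute (swapTrivialCosets A B) (MulAction.toPerm c) := by
  classical
  have hfix : c • ((1 : P) : P ⧸ A ⊓ B) = ↑(1 : P) := by
    rw [MulAction.Quotient.smul_coe, smul_eq_mul, mul_one, QuotientGroup.eq, mul_one]
    exact inv_mem hc
  have hswap := Equiv.mul_swap_eq_swap_mul
    (MulAction.toPerm c : Equiv.Perm ((P ⧸ A ⊓ B) ⊕ (P ⧸ A ⊓ B))) (.inl ↑(1 : P)) (.inr ↑(1 : P))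
  rw [MulAction.toPerm_apply, MulAction.toPerm_apply, Sum.smul_inl, Sum.smul_inr, hfix] at hswap
  exact hswap.symm

theorem elim_id_swapTrivialCosets (w : (P ⧸ A ⊓ B) ⊕ (P ⧸ A ⊓ B)) :
    Sum.elim id id (swapTrivialCosets A B w) = Sum.elim id id w := by
  classical
  unfold swapTrivialCosets
  rw [Equiv.swap_apply_def]
  split_ifs with hl hr
  · rw [hl]; rfl
  · rw [hr]; rfl
  · rfl

theorem isLeft_swapTrivialCosets_ne_iff (w : (P ⧸ A ⊓ B) ⊕ (P ⧸ A ⊓ B)) :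
    w.isLeft ≠ (swapTrivialCosets A B w).isLeft ↔ Sum.elim id id w = ((1 : P) : P ⧸ A ⊓ B) := by
  classical
  unfold swapTrivialCosets
  rw [Equiv.swap_apply_def]
  rcases w with w | w <;> split_ifs <;> simp_all

theorem isLeft_smul {X Y : Type*} [MulAction P X] [MulAction P Y] (g : P) (w : X ⊕ Y) :
    (g • w).isLeft = w.isLeft := by
  cases w <;> rfl

namespace IsTwistedAction

variable {ρ : P →* Equiv.Perm ((P ⧸ A ⊓ B) ⊕ (P ⧸ A ⊓ B))} (hρ : IsTwistedAction A B ρ)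

include hρ

theorem elim_id_apply (hgen : A ⊔ B = ⊤) (g : P) (w : (P ⧸ A ⊓ B) ⊕ (P ⧸ A ⊓ B)) :
    Sum.elim id id (ρ g w) = g • Sum.elim id id w := by
  have elim_id_smul (g : P) (w : (P ⧸ A ⊓ B) ⊕ (P ⧸ A ⊓ B)) :
      Sum.elim id id (g • w) = g • Sum.elim id id w := by cases w <;> rfl
  induction g using induction_of_sup_eq_top hgen with
  | one => simp
  | left a ha g ih =>
    rw [map_mul, Equiv.Perm.mul_apply, hρ.apply_left ha, MulAction.toPerm_apply, elim_id_smul, ih,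
      mul_smul]
  | right b hb g ih =>
    rw [map_mul, Equiv.Perm.mul_apply, hρ.apply_right hb, Equiv.Perm.mul_apply,
      Equiv.Perm.mul_apply, elim_id_swapTrivialCosets, MulAction.toPerm_apply, elim_id_smul,
      elim_id_swapTrivialCosets, ih, mul_smul]

theorem exists_side_ne_iff (hgen : A ⊔ B = ⊤) : ∃ σ : (P ⧸ A) ⊕ (P ⧸ B) → Bool,
    ∀ g : P, σ (.inl g) ≠ σ (.inr g) ↔ g ∈ A ⊓ B := by
  let t := swapTrivialCosets A B
  let w (g : P) : (P ⧸ A ⊓ B) ⊕ (P ⧸ A ⊓ B) := ρ g⁻¹ (.inl ↑(1 : P))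
  refine ⟨Sum.elim (fun x => (w x.out).isLeft) fun x => (t (w x.out)).isLeft, fun g => ?_⟩
  have hw {g a : P} (ha : a ∈ A) : (w (g * a)).isLeft = (w g).isLeft := by
    simp only [w, mul_inv_rev, map_mul, Equiv.Perm.mul_apply, hρ.apply_left (A.inv_mem ha),
      MulAction.toPerm_apply, isLeft_smul]
  have htw {g b : P} (hb : b ∈ B) : (t (w (g * b))).isLeft = (t (w g)).isLeft := by
    simp only [w, t, mul_inv_rev, map_mul, Equiv.Perm.mul_apply, hρ.apply_right (B.inv_mem hb),
      MulAction.toPerm_apply, swapTrivialCosets_apply_apply, isLeft_smul]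
  obtain ⟨⟨a, ha⟩, hout⟩ := QuotientGroup.mk_out_eq_mul A g
  obtain ⟨⟨b, hb⟩, hout'⟩ := QuotientGroup.mk_out_eq_mul B g
  rw [Sum.elim_inl, Sum.elim_inr, hout, hout', hw ha, htw hb, isLeft_swapTrivialCosets_ne_iff,
    hρ.elim_id_apply hgen, Sum.elim_inl, id, MulAction.Quotient.smul_coe, QuotientGroup.eq]
  simp

theorem isTree_cosetGraph (hgen : A ⊔ B = ⊤) : (cosetGraph A B).IsTree := by
  refine ⟨connected_cosetGraph hgen, SimpleGraph.isAcyclic_iff_forall_adj_isBridge.2 ?_⟩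
  obtain ⟨σ, hσ⟩ := hρ.exists_side_ne_iff hgen
  let edge (g : P) : Sym2 ((P ⧸ A) ⊕ (P ⧸ B)) := s(.inl ↑g, .inr ↑g)
  have isBridge_edge (g : P) : (cosetGraph A B).IsBridge (edge g) := by
    refine isBridge_of_forall_adj_eq (fun v => σ (g⁻¹ • v)) ((hσ (g⁻¹ * g)).2 (by simp)) ?_
    have eq_of_ne (x : P) (hx : edge x ≠ edge g) :
        σ (g⁻¹ • .inl ↑x) = σ (g⁻¹ • .inr ↑x) := by
      by_contra hne
      obtain ⟨hA, hB⟩ := (hσ (g⁻¹ * x)).1 hne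
      refine hx ?_
      simp only [edge, QuotientGroup.eq.2 hA, QuotientGroup.eq.2 hB]
    intro x y hadj hxy
    obtain ⟨x, ⟨rfl, rfl⟩ | ⟨rfl, rfl⟩⟩ := cosetGraph_adj_iff.1 hadj
    · exact eq_of_ne x hxy
    · exact (eq_of_ne x fun hx => hxy (Sym2.eq_swap.trans hx)).symm
  intro v w hadj
  obtain ⟨g, ⟨rfl, rfl⟩ | ⟨rfl, rfl⟩⟩ := cosetGraph_adj_iff.1 hadj
  · exact isBridge_edge g
  · rw [Sym2.eq_swap]
    exact isBridge_edge g

end IsTwistedAction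

theorem classD_stabilizer_coe (hA : ClassD A) (a : P ⧸ A) :
    ClassD (MulAction.stabilizer P a) := by
  induction a using QuotientGroup.induction_on with | _ g => ?_
  refine hA.of_mulEquiv ((MulEquiv.subgroupCongr (MulAction.stabilizer_quotient A).symm).trans
    (MulAction.stabilizerEquivStabilizer (g := g) ?_))
  simp

theorem IsTwistedAction.classD {ρ : P →* Equiv.Perm ((P ⧸ A ⊓ B) ⊕ (P ⧸ A ⊓ B))}
    (hρ : IsTwistedAction A B ρ) (hgen : A ⊔ B = ⊤) (hmal : IsMalnormal (B.subgroupOf A))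
    (hA : ClassD A) (hB : ClassD B) : ClassD P := by
  refine classD_of_classD_stabilizer (hρ.isTree_cosetGraph hgen) actsByAutomorphisms_cosetGraph
    isInvariantBipartition_cosetGraph (isMalnormalOutside_cosetGraph hmal) ?_
  rintro (a | b)
  · refine (classD_stabilizer_coe hA a).of_mulEquiv (MulEquiv.subgroupCongr ?_)
    ext g
    simp
  · refine (classD_stabilizer_coe hB b).of_mulEquiv (MulEquiv.subgroupCongr ?_)
    ext g
    simp

end CosetGraph

section AmalgamatedFreeProduct

variable {H : Type u} {A : Type v} {B : Type w} {P : Type (max u v w)} [Group H] [Group A]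
  [Group B] [Group P] {φ : H →* A} {ψ : H →* B} {ja : A →* P} {jb : B →* P}

theorem exists_injective_comp_eq_comp (hφ : Function.Injective φ) (hψ : Function.Injective ψ) :
    ∃ (Q : Type (max u v w)) (_ : Group Q) (f : A →* Q) (g : B →* Q),
      f.comp φ = g.comp ψ ∧ Function.Injective f ∧ Function.Injective g ∧
        f.range ⊓ g.range ≤ (f.comp φ).range := by
  -- `PushoutI` takes factors in one universe; enlarging both to `A × B` is harmless.
  let θ : Bool → H →* A × B := fun i =>
    bif i then (MonoidHom.inl A B).comp φ else (MonoidHom.inr A B).comp ψ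
  have hθ (i : Bool) : Function.Injective (θ i) := by
    cases i
    · exact fun _ _ h => hψ (congrArg Prod.snd h)
    · exact fun _ _ h => hφ (congrArg Prod.fst h)
  have hleft : ((Monoid.PushoutI.of (φ := θ) true).comp (MonoidHom.inl A B)).comp φ =
      Monoid.PushoutI.base θ := Monoid.PushoutI.of_comp_eq_base true
  have hright : ((Monoid.PushoutI.of (φ := θ) false).comp (MonoidHom.inr A B)).comp ψ =
      Monoid.PushoutI.base θ := Monoid.PushoutI.of_comp_eq_base false
  refine ⟨Monoid.PushoutI θ, inferInstance, _, _, hleft.trans hright.symm,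
    (Monoid.PushoutI.of_injective hθ true).comp (Prod.mk_left_injective 1),
    (Monoid.PushoutI.of_injective hθ false).comp (Prod.mk_right_injective 1), ?_⟩
  rw [hleft, ← Monoid.PushoutI.inf_of_range_eq_base_range hθ (by decide : true ≠ false),
    MonoidHom.range_comp, MonoidHom.range_comp]
  exact inf_le_inf (Subgroup.map_le_range _ _) (Subgroup.map_le_range _ _)

namespace IsAmalgamatedFreeProduct

variable (hP : IsAmalgamatedFreeProduct φ ψ ja jb)

include hP

theorem range_sup_range : ja.range ⊔ jb.range = ⊤ := by
  let K := ja.range ⊔ jb.range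
  let fa : A →* K := ja.codRestrict K fun a => Subgroup.mem_sup_left ⟨a, rfl⟩
  let fb : B →* K := jb.codRestrict K fun b => Subgroup.mem_sup_right ⟨b, rfl⟩
  have hfab : fa.comp φ = fb.comp ψ := by
    ext c
    exact DFunLike.congr_fun hP.1 c
  obtain ⟨r, ⟨hra, hrb⟩, -⟩ := hP.2 K fa fb hfab
  have hid : MonoidHom.id P = K.subtype.comp r :=
    (hP.2 P ja jb hP.1).unique ⟨rfl, rfl⟩
      ⟨by rw [MonoidHom.comp_assoc, hra]; rfl, by rw [MonoidHom.comp_assoc, hrb]; rfl⟩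
  refine eq_top_iff.2 fun p _ => ?_
  rw [← MonoidHom.id_apply P p, hid]
  exact (r p).2

theorem injective_and_injective_and_comap_range (hφ : Function.Injective φ)
    (hψ : Function.Injective ψ) :
    Function.Injective ja ∧ Function.Injective jb ∧ jb.range.comap ja = φ.range := by
  obtain ⟨Q, _, f, g, hfg, hf, hg, hinf⟩ := exists_injective_comp_eq_comp hφ hψ
  obtain ⟨r, ⟨rfl, rfl⟩, -⟩ := hP.2 Q f g hfg
  refine ⟨Function.Injective.of_comp (f := r) hf, Function.Injective.of_comp (f := r) hg,
    le_antisymm ?_ ?_⟩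
  · rintro a ⟨b, hb⟩
    obtain ⟨h, hh⟩ := hinf ⟨⟨a, rfl⟩, ⟨b, congrArg r hb⟩⟩
    exact ⟨h, hf hh⟩
  · rintro _ ⟨h, rfl⟩
    exact ⟨ψ h, (DFunLike.congr_fun hP.1 h).symm⟩

theorem exists_isTwistedAction : ∃ ρ, IsTwistedAction ja.range jb.range ρ := by
  let t := swapTrivialCosets ja.range jb.range
  let τ := MulAction.toPermHom P ((P ⧸ ja.range ⊓ jb.range) ⊕ (P ⧸ ja.range ⊓ jb.range))
  have hcompat : (τ.comp ja).comp φ = ((MulAut.conj t).toMonoidHom.comp (τ.comp jb)).comp ψ := by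
    refine MonoidHom.ext fun h => ?_
    have hmem : jb (ψ h) ∈ ja.range ⊓ jb.range := ⟨⟨φ h, DFunLike.congr_fun hP.1 h⟩, ⟨ψ h, rfl⟩⟩
    have hφψ : ja (φ h) = jb (ψ h) := DFunLike.congr_fun hP.1 h
    change τ (ja (φ h)) = t * τ (jb (ψ h)) * t⁻¹
    rw [hφψ, eq_mul_inv_iff_mul_eq]
    exact (commute_swapTrivialCosets_toPerm hmem).symm
  obtain ⟨ρ, ⟨hρa, hρb⟩, -⟩ := hP.2 _ _ _ hcompat
  refine ⟨ρ, ?_, ?_⟩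
  · rintro _ ⟨a, rfl⟩
    exact DFunLike.congr_fun hρa a
  · rintro _ ⟨b, rfl⟩
    have hinv : t⁻¹ = t := inv_eq_of_mul_eq_one_left (Equiv.ext swapTrivialCosets_apply_apply)
    have hconj : ρ (jb b) = t * MulAction.toPerm (jb b) * t⁻¹ := DFunLike.congr_fun hρb b
    rwa [hinv] at hconj

theorem isMalnormal_subgroupOf (hφ : Function.Injective φ) (hψ : Function.Injective ψ)
    (hmal : IsMalnormal φ.range) : IsMalnormal (jb.range.subgroupOf ja.range) := by
  obtain ⟨-, -, hcomap⟩ := hP.injective_and_injective_and_comap_range hφ hψ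
  rintro ⟨_, a, rfl⟩ ⟨_, c, rfl⟩ hc hc1 hac
  have mem_range_iff (x : A) : ja x ∈ jb.range ↔ x ∈ φ.range := by
    rw [← hcomap, Subgroup.mem_comap]
  refine (mem_range_iff a).2 (hmal a c ((mem_range_iff c).1 hc) ?_ ((mem_range_iff _).1 ?_))
  · rintro rfl
    exact hc1 (Subtype.ext (map_one ja))
  · simpa [Subgroup.mem_subgroupOf] using hac

theorem classD (hφ : Function.Injective φ) (hψ : Function.Injective ψ)
    (hmal : IsMalnormal φ.range) (hA : ClassD A) (hB : ClassD B) : ClassD P := by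
  obtain ⟨hja, hjb, -⟩ := hP.injective_and_injective_and_comap_range hφ hψ
  obtain ⟨ρ, hρ⟩ := hP.exists_isTwistedAction
  exact hρ.classD hP.range_sup_range (hP.isMalnormal_subgroupOf hφ hψ hmal)
    (hA.of_mulEquiv (MonoidHom.ofInjective hja)) (hB.of_mulEquiv (MonoidHom.ofInjective hjb))

end IsAmalgamatedFreeProduct

end AmalgamatedFreeProduct

section CyclicAmalgam

variable {G : Type*} [Group G] (hG : ClassD G) {u : G} (hu : u ≠ 1)

include hG hu

theorem ClassD.zpowersHom_injective : Function.Injective (zpowersHom G u) := by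
  refine (injective_iff_map_eq_one _).2 fun n hn => ?_
  by_contra hn1
  exact hu (hG.eq_one_of_zpow_eq_one hn1 hn)

variable (hcent : Subgroup.centralizer ({u} : Set G) = Subgroup.zpowers u)

include hcent

theorem ClassD.noPrimeRoot_of_centralizer_eq_zpowers : NoPrimeRoot u := by
  refine ⟨2, Nat.prime_two, ?_⟩
  rintro ⟨h, hh⟩
  have hmem : h ∈ Subgroup.zpowers u := by
    rw [← hcent, Subgroup.mem_centralizer_singleton_iff, ← hh]
    exact Commute.self_pow h 2
  obtain ⟨n, rfl⟩ := hmem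
  refine hu (hG.eq_one_of_zpow_eq_one (r := n * 2 - 1) (by omega) ?_)
  rw [zpow_sub, zpow_mul, zpow_one, mul_inv_eq_one]
  exact mod_cast hh

theorem ClassD.isMalnormal_zpowers : IsMalnormal (Subgroup.zpowers u) := by
  rintro f _ ⟨r, rfl⟩ hr1 ⟨s, hs⟩
  have hroot := hG.noPrimeRoot_of_centralizer_eq_zpowers hu hcent
  have hr : r ≠ 0 := by
    rintro rfl
    simp at hr1
  have hs0 : s ≠ 0 := by
    rintro rfl
    refine hr1 ?_
    simpa [mul_assoc, inv_mul_eq_one] using hs.symm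
  obtain rfl := hG.2.2.2 u hroot f r s hr hs0 hs.symm
  rw [← hcent, ← hG.2.2.1 u hroot r hr, Subgroup.mem_centralizer_singleton_iff]
  exact inv_mul_mul_eq_iff_commute.1 hs.symm

end CyclicAmalgam

theorem classD_of_amalgamated_root_adjunction_general {G : Type u} {B : Type v} [Group G] [Group B]
    (hG : ClassD G) (hB : ClassD B) (u : G) (hu : u ≠ 1)
    (hcent : Subgroup.centralizer ({u} : Set G) = Subgroup.zpowers u) (b : B) (hb : b ≠ 1)
    {P : Type (max u v)} [Group P] (jG : G →* P) (jB : B →* P)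
    (hP : IsAmalgamatedFreeProduct (zpowersHom G u) (zpowersHom B b) jG jB) : ClassD P := by
  refine hP.classD (hG.zpowersHom_injective hu) (hB.zpowersHom_injective hb) ?_ hG hB
  exact hG.isMalnormal_zpowers hu hcent

/-- **Proposition 6.1.** If `G ∈ 𝒟`, `u ∈ G` is a non-identity element with
`C_G(u) = ⟨u⟩`, and `m ≠ 0`, then the free product with amalgamation
`H = G *_{(u = xᵐ)} ⟨x⟩` is also in `𝒟`.  The amalgamated product is any pushout `P` of
`ℤ → G, 1 ↦ u` and `ℤ → ℤ = ⟨x⟩, 1 ↦ m`. -/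
theorem classD_of_amalgamated_root_adjunction
    {G : Type u} [Group G] (hG : ClassD G)
    (u : G) (hu : u ≠ 1)
    (hcent : Subgroup.centralizer ({u} : Set G) = Subgroup.zpowers u)
    (m : ℤ) (hm : m ≠ 0)
    {P : Type u} [Group P] (jG : G →* P) (jx : Multiplicative ℤ →* P)
    (hP : IsAmalgamatedFreeProduct (zpowersHom G u)
      (zpowersHom (Multiplicative ℤ) (Multiplicative.ofAdd m)) jG jx) :
    ClassD P := by
  exact classD_of_amalgamated_root_adjunction_general hG
    (classD_of_injective_int (MonoidHom.id _) Function.injective_id) u hu hcent _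
    (fun h => hm (ofAdd_eq_one.1 h)) jG jx hP
end

section
/- Let p be a prime and let G be a finitely generated group that is residually a finite p-group. Let u be an element of G of infinite order whose centralizer in G is exactly ⟨u⟩. Then for every integer n ≥ 0, the free product with amalgamation H = G *_{(u = x^{p^n})} ⟨x⟩ is residually a finite p-group. -/
universe u v w x

/-- A group is residually a finite `p`-group. -/
def IsResiduallyFinitePGroup (p : ℕ) (G : Type*) [Group G] : Prop :=
  ∀ g : G, g ≠ 1 → ∃ N : Subgroup G, ∃ _ : N.Normal, g ∉ N ∧
    Finite (G ⧸ N) ∧ IsPGroup p (G ⧸ N)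

/-!
Let `K ≤ P` be the amalgamated subgroup. An element of `P` outside `G` is `g * w` with `w` an
alternating product of syllables from the two factors, and it survives in a finite `p`-quotient as
soon as there is one, `θ : P →* Q`, that keeps the inner syllables of `w` outside `U = θ(K)`.
Indeed, let `Q` act on the functions on words of bounded length with letters in `Q`, and let `E` be
an operator of square zero that prepends a letter and commutes with `U`. Since `E` commutes with
`U`, the action of the first factor through `θ` and that of the second one conjugated by `1 + E`
glue to a representation of `P`. In characteristic `p` its image is a `p`-group, because modulo the
nilpotent operators that raise the length of words it is the image of `Q`. Every syllable outside
`U` makes the leading word of a function longer, so that `g * w` acts nontrivially.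

The required `θ` exists because a centralizer is closed in the pro-`p` topology, and because every
finite `p`-group embeds into a finite `p`-group in which a given element has a `p ^ n`-th root (a
wreath product with a cyclic group), so that finite `p`-quotients of `G` extend to `P`.
-/

section WordRepresentation

/-- The words of length at most `M` in the elements of `Q`; they index the coordinates of the
representation in which nontrivial alternating products are detected. -/
@[ext]
structure TruncatedWord (M : ℕ) (Q : Type*) where
  letters : List Q
  length_le : letters.length ≤ M

variable {M : ℕ} {Q R : Type*}

instance [Finite Q] : Finite (TruncatedWord M Q) :=
  have := (List.finite_length_le Q M).to_subtype
  Finite.of_injective (β := {l : List Q | l.length ≤ M}) (fun l => ⟨l.letters, l.length_le⟩)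
    fun _ _ h => TruncatedWord.ext (congrArg Subtype.val h)

instance : Nonempty (TruncatedWord M Q) :=
  ⟨⟨[], M.zero_le⟩⟩

/-- `l` is a word of maximal length among those at which `v` does not vanish. -/
def HasLeadingWord [Zero R] (v : TruncatedWord M Q → R) (l : List Q) : Prop :=
  (∀ k : TruncatedWord M Q, l.length < k.letters.length → v k = 0) ∧
    ∃ h : l.length ≤ M, v ⟨l, h⟩ ≠ 0

theorem HasLeadingWord.length_eq [Zero R] {v : TruncatedWord M Q → R} {l l' : List Q}
    (hv : HasLeadingWord v l) (hv' : HasLeadingWord v l') : l.length = l'.length := by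
  obtain ⟨hM, hl⟩ := hv.2
  obtain ⟨hM', hl'⟩ := hv'.2
  exact le_antisymm (not_lt.1 fun h => hl (hv'.1 ⟨l, hM⟩ h))
    (not_lt.1 fun h => hl' (hv.1 ⟨l', hM'⟩ h))

theorem HasLeadingWord.neg [AddGroup R] {v : TruncatedWord M Q → R} {l : List Q}
    (hv : HasLeadingWord v l) : HasLeadingWord (-v) l :=
  ⟨fun k hk => neg_eq_zero.2 (hv.1 k hk), hv.2.imp fun _ => neg_ne_zero.2⟩

theorem HasLeadingWord.add_of_length_lt [AddZeroClass R] {v w : TruncatedWord M Q → R}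
    {l l' : List Q} (hv : HasLeadingWord v l) (hw : HasLeadingWord w l')
    (h : l.length < l'.length) : HasLeadingWord (v + w) l' := by
  obtain ⟨hM, hl'⟩ := hw.2
  refine ⟨fun k hk => ?_, hM, ?_⟩
  · rw [Pi.add_apply, hv.1 k (h.trans hk), hw.1 k hk, add_zero]
  · rwa [Pi.add_apply, hv.1 ⟨l', hM⟩ h, zero_add]

variable (M Q R) in
/-- The operators that raise the filtration of the functions on words given by vanishing on all
words shorter than `j`. -/
def lengthRaising [CommRing R] : NonUnitalSubring (Module.End R (TruncatedWord M Q → R)) where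
  carrier := {N | ∀ (f : TruncatedWord M Q → R) (j : ℕ), (∀ l, l.letters.length < j → f l = 0) →
    ∀ l, l.letters.length < j + 1 → N f l = 0}
  zero_mem' _ _ _ _ _ := rfl
  add_mem' hN hN' f j hf l hl := by simp [hN f j hf l hl, hN' f j hf l hl]
  neg_mem' hN f j hf l hl := by simp [hN f j hf l hl]
  mul_mem' hN hN' f j hf := hN _ j fun l hl => hN' f j hf l (Nat.lt_succ_of_lt hl)

theorem lengthRaising_pow_eq_zero [CommRing R] {N : Module.End R (TruncatedWord M Q → R)}
    (hN : N ∈ lengthRaising M Q R) : N ^ (M + 1) = 0 := by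
  have vanishing (k : ℕ) (f : TruncatedWord M Q → R) (l : TruncatedWord M Q)
      (hl : l.letters.length < k) : (N ^ k) f l = 0 := by
    induction k generalizing l with
    | zero => exact absurd hl l.letters.length.not_lt_zero
    | succ k ih =>
      rw [pow_succ', Module.End.mul_apply]
      exact hN _ k ih l hl
  exact LinearMap.ext fun f => funext fun l => vanishing _ f l (Nat.lt_succ_of_le l.length_le)

variable [Group Q] [CommRing R]

/-- `Q` acts on words by left multiplication on the first letter, fixing the empty word. -/
instance : MulAction Q (TruncatedWord M Q) where
  smul g l := ⟨l.letters.modifyHead (g * ·), List.length_modifyHead.trans_le l.length_le⟩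
  one_smul l := TruncatedWord.ext (by cases h : l.letters <;> simp [HSMul.hSMul, h])
  mul_smul g h l := TruncatedWord.ext (by cases h : l.letters <;> simp [HSMul.hSMul, h, mul_assoc])

theorem TruncatedWord.length_smul (g : Q) (l : TruncatedWord M Q) :
    (g • l).letters.length = l.letters.length :=
  List.length_modifyHead

variable (R) in
/-- The linear representation of `Q` on functions on words induced by its action on words. -/
def wordTranslation : Q →* Module.End R (TruncatedWord M Q → R) where
  toFun g := LinearMap.funLeft R R (g⁻¹ • ·)
  map_one' := by ext; simp
  map_mul' g h := by ext; simp [mul_smul]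

theorem wordTranslation_apply (g : Q) (f : TruncatedWord M Q → R) (l : TruncatedWord M Q) :
    wordTranslation R g f l = f (g⁻¹ • l) := rfl

theorem wordTranslation_mul_mem_lengthRaising (g : Q)
    {N : Module.End R (TruncatedWord M Q → R)} (hN : N ∈ lengthRaising M Q R) :
    wordTranslation R g * N ∈ lengthRaising M Q R :=
  fun f j hf l hl => hN f j hf (g⁻¹ • l) (by rwa [TruncatedWord.length_smul])

theorem mul_wordTranslation_mem_lengthRaising (g : Q)
    {N : Module.End R (TruncatedWord M Q → R)} (hN : N ∈ lengthRaising M Q R) :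
    N * wordTranslation R g ∈ lengthRaising M Q R :=
  fun f j hf => hN (wordTranslation R g f) j fun l hl =>
    hf _ (by rwa [TruncatedWord.length_smul])

theorem HasLeadingWord.apply_wordTranslation {v : TruncatedWord M Q → R} {l : List Q}
    (hv : HasLeadingWord v l) (g : Q) :
    HasLeadingWord (wordTranslation R g v) (l.modifyHead (g * ·)) := by
  obtain ⟨hM, hl⟩ := hv.2
  refine ⟨fun k hk => hv.1 _ ?_, List.length_modifyHead.trans_le hM, ?_⟩
  · rwa [TruncatedWord.length_smul, ← List.length_modifyHead (f := (g * ·))]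
  · change v (g⁻¹ • g • ⟨l, hM⟩) ≠ 0
    rwa [inv_smul_smul]

open Classical in
variable (R) in
/-- The operator that sends the indicator function of a word `l` to the sum, over `u ∈ U`, of the
indicator functions of the words `u :: u⁻¹ • l`, or to `0` if the first letter of `l` is in `U` or
`l` has length `M`. -/
noncomputable def wordPrepend (U : Subgroup Q) : Module.End R (TruncatedWord M Q → R) :=
  LinearMap.pi fun
    | ⟨[], _⟩ => 0
    | ⟨r :: l, h⟩ =>
      if r ∈ U ∧ ∀ s ∈ l.head?, r * s ∉ U then
        LinearMap.proj (r • ⟨l, (Nat.le_succ _).trans h⟩)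
      else 0

open Classical in
theorem wordPrepend_cons (U : Subgroup Q) (f : TruncatedWord M Q → R) (r : Q) (l : List Q)
    (h : (r :: l).length ≤ M) :
    wordPrepend R U f ⟨r :: l, h⟩ =
      if r ∈ U ∧ ∀ s ∈ l.head?, r * s ∉ U then f (r • ⟨l, (Nat.le_succ _).trans h⟩) else 0 := by
  change (if _ then _ else _ : _ →ₗ[R] R) f = _
  split_ifs <;> rfl

theorem wordPrepend_mul_self (U : Subgroup Q) :
    (wordPrepend R U * wordPrepend R U : Module.End R (TruncatedWord M Q → R)) = 0 := by
  refine LinearMap.ext fun f => funext ?_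
  rintro ⟨_ | ⟨r, l⟩, h⟩
  · rfl
  rw [Module.End.mul_apply, wordPrepend_cons]
  split_ifs with hr
  · rcases l with _ | ⟨s, l⟩
    · rfl
    · exact (wordPrepend_cons U f (r * s) l _).trans (if_neg fun hs => hr.2 s rfl hs.1)
  · rfl

theorem commute_wordTranslation_wordPrepend {U : Subgroup Q} {g : Q} (hg : g ∈ U) :
    Commute (wordTranslation R g : Module.End R (TruncatedWord M Q → R)) (wordPrepend R U) := by
  refine LinearMap.ext fun f => funext ?_
  rintro ⟨_ | ⟨r, l⟩, h⟩
  · rfl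
  change wordPrepend R U f ⟨g⁻¹ * r :: l, h⟩ =
    wordPrepend R U (wordTranslation R g f) ⟨r :: l, h⟩
  have hcond : (g⁻¹ * r ∈ U ∧ ∀ s ∈ l.head?, g⁻¹ * r * s ∉ U) ↔
      r ∈ U ∧ ∀ s ∈ l.head?, r * s ∉ U := by
    simp only [mul_assoc, U.mul_mem_cancel_left (U.inv_mem hg)]
  classical
  rw [wordPrepend_cons, wordPrepend_cons, wordTranslation_apply, smul_smul]
  exact if_congr hcond rfl rfl

theorem wordPrepend_mem_lengthRaising (U : Subgroup Q) :
    wordPrepend R U ∈ lengthRaising M Q R := by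
  rintro f j hf ⟨_ | ⟨r, l⟩, h⟩ hl
  · rfl
  rw [wordPrepend_cons]
  split_ifs
  · exact hf _ (by rw [TruncatedWord.length_smul]; exact Nat.lt_of_succ_lt_succ hl)
  · rfl

section LeadingWord

variable {U : Subgroup Q} {v : TruncatedWord M Q → R} {l : List Q}

theorem HasLeadingWord.apply_wordPrepend (hv : HasLeadingWord v l) (hl : ∀ s ∈ l.head?, s ∉ U)
    (hM : l.length < M) : HasLeadingWord (wordPrepend R U v) (1 :: l) := by
  refine ⟨?_, hM, ?_⟩
  · rintro ⟨_ | ⟨r, k⟩, h⟩ hk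
    · rfl
    rw [wordPrepend_cons]
    split_ifs
    · exact hv.1 _ (by rw [TruncatedWord.length_smul]; exact Nat.lt_of_succ_lt_succ hk)
    · rfl
  · rw [wordPrepend_cons, if_pos ⟨U.one_mem, by simpa using hl⟩, one_smul]
    exact hv.2.2

theorem HasLeadingWord.apply_one_add_wordPrepend (hv : HasLeadingWord v l)
    (hl : ∀ s ∈ l.head?, s ∉ U) (hM : l.length < M) :
    HasLeadingWord ((1 + wordPrepend R U) v) (1 :: l) :=
  hv.add_of_length_lt (hv.apply_wordPrepend hl hM) l.length.lt_succ_self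

theorem HasLeadingWord.apply_one_sub_wordPrepend (hv : HasLeadingWord v l)
    (hl : ∀ s ∈ l.head?, s ∉ U) (hM : l.length < M) :
    HasLeadingWord ((1 - wordPrepend R U) v) (1 :: l) := by
  rw [sub_eq_add_neg]
  exact hv.add_of_length_lt (hv.apply_wordPrepend hl hM).neg l.length.lt_succ_self

theorem HasLeadingWord.apply_conj_wordTranslation (hv : HasLeadingWord v l)
    (hl : ∀ s ∈ l.head?, s ∉ U) {g : Q} (hg : g ∉ U) (hM : l.length + 2 ≤ M) :
    HasLeadingWord (((1 + wordPrepend R U) * wordTranslation R g *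
      (1 - wordPrepend R U) : Module.End R _) v) (1 :: g :: l) := by
  have h := (hv.apply_one_sub_wordPrepend hl (by omega)).apply_wordTranslation g
  rw [List.modifyHead_cons, mul_one] at h
  exact h.apply_one_add_wordPrepend (by simpa using hg) hM

end LeadingWord

end WordRepresentation

section CongruenceUnits

variable {S Q : Type*} [Ring S] [Group Q] {ρ : Q →* S} {J : NonUnitalSubring S}

theorem mul_sub_map_mul_mem (hl : ∀ g, ∀ x ∈ J, ρ g * x ∈ J) (hr : ∀ g, ∀ x ∈ J, x * ρ g ∈ J)
    {a b : S} {g h : Q} (ha : a - ρ g ∈ J) (hb : b - ρ h ∈ J) : a * b - ρ (g * h) ∈ J := by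
  have expand : a * b - ρ (g * h) =
      (a - ρ g) * (b - ρ h) + ρ g * (b - ρ h) + (a - ρ g) * ρ h := by
    rw [map_mul]
    noncomm_ring
  rw [expand]
  exact J.add_mem (J.add_mem (J.mul_mem ha hb) (hl g _ hb)) (hr h _ ha)

theorem pow_sub_map_pow_mem (hl : ∀ g, ∀ x ∈ J, ρ g * x ∈ J) (hr : ∀ g, ∀ x ∈ J, x * ρ g ∈ J)
    {a : S} {g : Q} (ha : a - ρ g ∈ J) (k : ℕ) : a ^ k - ρ (g ^ k) ∈ J := by
  induction k with
  | zero => simp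
  | succ k ih =>
    rw [pow_succ, pow_succ]
    exact mul_sub_map_mul_mem hl hr ih ha

variable (ρ J) in
/-- The units that agree with some `ρ g` modulo `J`. Finiteness of `S` is what makes this set closed
under inversion, as `J` is only assumed to be stable under multiplication by the image of `ρ`. -/
def congruenceUnits [Finite S] (hl : ∀ g, ∀ x ∈ J, ρ g * x ∈ J)
    (hr : ∀ g, ∀ x ∈ J, x * ρ g ∈ J) : Subgroup Sˣ :=
  let T : Submonoid Sˣ :=
    { carrier := {z | ∃ g, (z : S) - ρ g ∈ J}
      one_mem' := ⟨1, by simp⟩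
      mul_mem' := fun ⟨g, hg⟩ ⟨h, hh⟩ => ⟨g * h, mul_sub_map_mul_mem hl hr hg hh⟩ }
  { T with
    inv_mem' := fun {z} hz =>
      (Submonoid.powers_le (P := T)).2 hz <|
        (isOfFinOrder_of_finite z).mem_powers_iff_mem_zpowers.2 <|
          inv_mem (Subgroup.mem_zpowers z) }

theorem pow_char_pow_eq_one {p : ℕ} [Fact p.Prime] [CharP S p] {a : S} {k : ℕ}
    (ha : (a - 1) ^ k = 0) : a ^ p ^ k = 1 := by
  have hk : k ≤ p ^ k := (Nat.lt_pow_self (Fact.out : p.Prime).one_lt).le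
  rw [← sub_add_cancel a 1, add_pow_char_pow_of_commute _ _ (Commute.one_right _), one_pow,
    pow_eq_zero_of_le hk ha, zero_add]

theorem isPGroup_congruenceUnits {p : ℕ} [Fact p.Prime] [CharP S p] [Finite S]
    (hQ : IsPGroup p Q) (hl : ∀ g, ∀ x ∈ J, ρ g * x ∈ J) (hr : ∀ g, ∀ x ∈ J, x * ρ g ∈ J)
    {k : ℕ} (hJ : ∀ x ∈ J, x ^ k = 0) : IsPGroup p (congruenceUnits ρ J hl hr) := by
  rintro ⟨z, g, hz⟩
  obtain ⟨a, ha⟩ := hQ g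
  have hmem : (z : S) ^ p ^ a - 1 ∈ J := by
    simpa only [ha, map_one] using pow_sub_map_pow_mem hl hr hz (p ^ a)
  refine ⟨a + k, Subtype.ext (Units.ext ?_)⟩
  change (z : S) ^ p ^ (a + k) = 1
  rw [pow_add, pow_mul]
  exact pow_char_pow_eq_one (hJ _ hmem)

end CongruenceUnits

theorem exists_finite_pGroup_twist {p : ℕ} [Fact p.Prime] {Q : Type u} [Group Q] [Finite Q]
    (hQ : IsPGroup p Q) (U : Subgroup Q) (M : ℕ) :
    ∃ (Γ : Type u) (_ : Group Γ) (σ : Q →* Γ) (y : Γ)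
      (π : Γ →* Module.End (ZMod p) (TruncatedWord M Q → ZMod p)),
      Finite Γ ∧ IsPGroup p Γ ∧ (∀ g ∈ U, Commute (σ g) y) ∧
        (∀ g, π (σ g) = wordTranslation (ZMod p) g) ∧
        π y = 1 + wordPrepend (ZMod p) U ∧ π y⁻¹ = 1 - wordPrepend (ZMod p) U := by
  set E : Module.End (ZMod p) (TruncatedWord M Q → ZMod p) := wordPrepend (ZMod p) U
  have hE : E * E = 0 := wordPrepend_mul_self U
  have : Finite (Module.End (ZMod p) (TruncatedWord M Q → ZMod p)) :=
    Finite.of_injective _ DFunLike.coe_injective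
  have : CharP (Module.End (ZMod p) (TruncatedWord M Q → ZMod p)) p :=
    charP_of_injective_algebraMap (algebraMap (ZMod p) _).injective p
  let Y : (Module.End (ZMod p) (TruncatedWord M Q → ZMod p))ˣ :=
    ⟨1 + E, 1 - E, by simp [mul_sub, add_mul, hE], by simp [mul_add, sub_mul, hE]⟩
  let Γ := congruenceUnits (wordTranslation (ZMod p)) (lengthRaising M Q (ZMod p))
    (fun g _ => wordTranslation_mul_mem_lengthRaising g)
    (fun g _ => mul_wordTranslation_mem_lengthRaising g)
  let σ : Q →* Γ := (wordTranslation (ZMod p)).toHomUnits.codRestrict Γ fun g =>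
    ⟨g, by simp⟩
  have hY : Y ∈ Γ := ⟨1, by simpa [Y] using wordPrepend_mem_lengthRaising U⟩
  refine ⟨Γ, inferInstance, σ, ⟨Y, hY⟩, (Units.coeHom _).comp Γ.subtype, inferInstance,
    isPGroup_congruenceUnits hQ _ _ fun _ => lengthRaising_pow_eq_zero, fun g hg => ?_,
    fun _ => rfl, rfl, rfl⟩
  exact Subtype.ext <| Units.ext <|
    (Commute.one_right _).add_right (commute_wordTranslation_wordPrepend hg)

section PSeparability

variable {p : ℕ} {G : Type*} [Group G]

/-- `N` is an open normal subgroup for the pro-`p` topology of `G`, that is, a normal subgroup whose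
index is a power of `p`. -/
def IsPOpenNormal (p : ℕ) (N : Subgroup G) : Prop :=
  N.Normal ∧ ∃ k, N.index = p ^ k

/-- `g` is not in the closure of the subgroup `K` for the pro-`p` topology of `G`. -/
def IsPSeparated (p : ℕ) (K : Subgroup G) (g : G) : Prop :=
  ∃ N, IsPOpenNormal p N ∧ g ∉ K ⊔ N

theorem isPOpenNormal_iff_quotient [Fact p.Prime] (N : Subgroup G) [N.Normal] :
    IsPOpenNormal p N ↔ Finite (G ⧸ N) ∧ IsPGroup p (G ⧸ N) := by
  refine ⟨fun ⟨_, k, hk⟩ => ?_, fun ⟨_, hN⟩ => ⟨‹_›, hN.exists_card_eq⟩⟩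
  have : Finite (G ⧸ N) := Nat.finite_of_card_ne_zero
    (hk.trans_ne (pow_ne_zero k (Fact.out : p.Prime).ne_zero))
  exact ⟨this, IsPGroup.of_card hk⟩

theorem IsPOpenNormal.comap [Fact p.Prime] {H : Type*} [Group H] {N : Subgroup H}
    (hN : IsPOpenNormal p N) (f : G →* H) : IsPOpenNormal p (N.comap f) := by
  obtain ⟨_, k, hk⟩ := hN
  have hdvd : (N.comap f).index ∣ p ^ k := by
    rw [Subgroup.index_comap, ← hk]
    exact N.relIndex_dvd_index_of_normal _
  obtain ⟨j, -, hj⟩ := (Nat.dvd_prime_pow Fact.out).1 hdvd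
  exact ⟨inferInstance, j, hj⟩

theorem IsPOpenNormal.inf [Fact p.Prime] {N N' : Subgroup G} (hN : IsPOpenNormal p N)
    (hN' : IsPOpenNormal p N') : IsPOpenNormal p (N ⊓ N') := by
  obtain ⟨_, k, hk⟩ := hN
  obtain ⟨_, k', hk'⟩ := hN'
  have hdvd : (N ⊓ N').index ∣ p ^ (k + k') := by
    rw [← Subgroup.relIndex_mul_index inf_le_right, Subgroup.inf_relIndex_right, pow_add, ← hk,
      ← hk']
    exact mul_dvd_mul_right (N.relIndex_dvd_index_of_normal _) _
  obtain ⟨j, -, hj⟩ := (Nat.dvd_prime_pow Fact.out).1 hdvd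
  exact ⟨inferInstance, j, hj⟩

theorem isPSeparated_of_map_notMem [Fact p.Prime] {Q : Type*} [Group Q] [Finite Q]
    (hQ : IsPGroup p Q) (f : G →* Q) {K : Subgroup G} {g : G} (hg : f g ∉ K.map f) :
    IsPSeparated p K g := by
  have hbot : IsPOpenNormal p (⊥ : Subgroup Q) :=
    ⟨inferInstance, by simpa only [Subgroup.index_bot] using hQ.exists_card_eq⟩
  exact ⟨f.ker, hbot.comap f, by rwa [← Subgroup.comap_map_eq, Subgroup.mem_comap]⟩

theorem IsPSeparated.mono {K K' : Subgroup G} {g : G} (hg : IsPSeparated p K' g) (hK : K ≤ K') :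
    IsPSeparated p K g :=
  hg.imp fun _ hN => ⟨hN.1, fun h => hN.2 (sup_le_sup_right hK _ h)⟩

theorem isResiduallyFinitePGroup_iff [Fact p.Prime] :
    IsResiduallyFinitePGroup p G ↔ ∀ g : G, g ≠ 1 → IsPSeparated p ⊥ g := by
  refine forall₂_congr fun g _ => exists_congr fun N => ?_
  rw [bot_sup_eq]
  constructor
  · rintro ⟨_, hg, hN⟩
    exact ⟨(isPOpenNormal_iff_quotient N).2 hN, hg⟩
  · rintro ⟨hN, hg⟩
    have := hN.1
    exact ⟨this, hg, (isPOpenNormal_iff_quotient N).1 hN⟩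

open scoped commutatorElement in
theorem IsResiduallyFinitePGroup.isPSeparated_centralizer [Fact p.Prime]
    (hG : IsResiduallyFinitePGroup p G) {S : Set G} {g : G} (hg : g ∉ Subgroup.centralizer S) :
    IsPSeparated p (Subgroup.centralizer S) g := by
  obtain ⟨s, hs, hsg⟩ : ∃ s ∈ S, s * g ≠ g * s := by
    simpa only [Subgroup.mem_centralizer_iff, not_forall, exists_prop] using hg
  obtain ⟨N, _, hN, _, hpN⟩ := hG ⁅s, g⁆ (mt commutatorElement_eq_one_iff_mul_comm.1 hsg)
  refine isPSeparated_of_map_notMem hpN (QuotientGroup.mk' N) ?_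
  rintro ⟨c, hc, hcg⟩
  refine hN ((QuotientGroup.eq_one_iff _).1 ?_)
  rw [← QuotientGroup.mk'_apply, map_commutatorElement, ← hcg, ← map_commutatorElement,
    commutatorElement_eq_one_iff_mul_comm.2 (hc s hs), map_one]

end PSeparability

section AlternatingProducts

variable {p : ℕ} {P : Type*} [Group P] {A B K : Subgroup P}

/-- The products `b₁ a₁ ⋯ bₖ aₖ` of `k ≥ 1` pairs with `bᵢ ∈ B \ K` and `aᵢ ∈ A`, and with `aᵢ ∉ K`
for `i < k`. -/
inductive IsAlternating (A B K : Subgroup P) : ℕ → P → Prop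
  | single {b a : P} : b ∈ B → b ∉ K → a ∈ A → IsAlternating A B K 1 (b * a)
  | cons {b a w : P} {k : ℕ} : b ∈ B → b ∉ K → a ∈ A → a ∉ K → IsAlternating A B K k w →
      IsAlternating A B K (k + 1) (b * a * w)

namespace IsAlternating

theorem anti {K' : Subgroup P} {k : ℕ} {w : P} (hK : K ≤ K') (hw : IsAlternating A B K' k w) :
    IsAlternating A B K k w := by
  induction hw with
  | single hb hbK ha => exact single hb (fun h => hbK (hK h)) ha
  | cons hb hbK ha haK _ ih => exact cons hb (fun h => hbK (hK h)) ha (fun h => haK (hK h)) ih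

theorem mul_left (hKA : K ≤ A) {k : ℕ} {w : P} (hw : IsAlternating A B K k w) {c : P}
    (hc : c ∈ B) : c * w ∈ A ∨ ∃ a ∈ A, ∃ k w', IsAlternating A B K k w' ∧ c * w = a * w' := by
  cases hw with
  | @single b a hb _ ha =>
    by_cases hcb : c * b ∈ K
    · exact Or.inl (mul_assoc c b a ▸ A.mul_mem (hKA hcb) ha)
    · exact Or.inr ⟨1, A.one_mem, _, _, single (B.mul_mem hc hb) hcb ha, by group⟩
  | @cons b a w _ hb _ ha haK hw =>
    by_cases hcb : c * b ∈ K
    · exact Or.inr ⟨c * b * a, A.mul_mem (hKA hcb) ha, _, w, hw, by group⟩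
    · exact Or.inr ⟨1, A.one_mem, _, _, cons (B.mul_mem hc hb) hcb ha haK hw, by group⟩

theorem mem_or_exists_eq_mul (hKA : K ≤ A) (hKB : K ≤ B) (hAB : A ⊔ B = ⊤) (h : P) :
    h ∈ A ∨ ∃ a ∈ A, ∃ k w, IsAlternating A B K k w ∧ h = a * w := by
  have left_A {x h : P} (hx : x ∈ A)
      (hh : h ∈ A ∨ ∃ a ∈ A, ∃ k w, IsAlternating A B K k w ∧ h = a * w) :
      x * h ∈ A ∨ ∃ a ∈ A, ∃ k w, IsAlternating A B K k w ∧ x * h = a * w := by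
    rcases hh with hh | ⟨a, ha, k, w, hw, rfl⟩
    · exact Or.inl (A.mul_mem hx hh)
    · exact Or.inr ⟨x * a, A.mul_mem hx ha, k, w, hw, (mul_assoc x a w).symm⟩
  have left_B {x h : P} (hx : x ∈ B)
      (hh : h ∈ A ∨ ∃ a ∈ A, ∃ k w, IsAlternating A B K k w ∧ h = a * w) :
      x * h ∈ A ∨ ∃ a ∈ A, ∃ k w, IsAlternating A B K k w ∧ x * h = a * w := by
    by_cases hxK : x ∈ K
    · exact left_A (hKA hxK) hh
    rcases hh with hh | ⟨a, ha, k, w, hw, rfl⟩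
    · exact Or.inr ⟨1, A.one_mem, _, _, single hx hxK hh, (one_mul _).symm⟩
    rw [← mul_assoc]
    by_cases haK : a ∈ K
    · exact hw.mul_left hKA (B.mul_mem hx (hKB haK))
    · exact Or.inr ⟨1, A.one_mem, _, _, cons hx hxK ha haK hw, (one_mul _).symm⟩
  have hmem : h ∈ Subgroup.closure (A ∪ B : Set P) := by
    rw [← Subgroup.sup_eq_closure, hAB]
    exact Subgroup.mem_top h
  induction hmem using Subgroup.closure_induction_left with
  | one => exact Or.inl A.one_mem
  | mul_left x hx y _ ih => exact hx.elim (left_A · ih) (left_B · ih)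
  | inv_mul_cancel x hx y _ ih =>
    exact hx.elim (fun hx => left_A (A.inv_mem hx) ih) fun hx => left_B (B.inv_mem hx) ih

theorem exists_isPOpenNormal [Fact p.Prime] (hA : ∀ a ∈ A, a ∉ K → IsPSeparated p K a)
    (hB : ∀ b ∈ B, b ∉ K → IsPSeparated p K b) {k : ℕ} {w : P} (hw : IsAlternating A B K k w) :
    ∃ N, IsPOpenNormal p N ∧ IsAlternating A B (K ⊔ N) k w := by
  induction hw with
  | single hb hbK ha =>
    obtain ⟨N, hN, hbN⟩ := hB _ hb hbK
    exact ⟨N, hN, single hb hbN ha⟩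
  | cons hb hbK ha haK _ ih =>
    obtain ⟨N, hN, hw⟩ := ih
    obtain ⟨N₁, hN₁, hbN₁⟩ := hB _ hb hbK
    obtain ⟨N₂, hN₂, haN₂⟩ := hA _ ha haK
    have le₁ : K ⊔ (N₁ ⊓ N₂ ⊓ N) ≤ K ⊔ N₁ :=
      sup_le_sup_left (inf_le_left.trans inf_le_left) K
    have le₂ : K ⊔ (N₁ ⊓ N₂ ⊓ N) ≤ K ⊔ N₂ :=
      sup_le_sup_left (inf_le_left.trans inf_le_right) K
    exact ⟨N₁ ⊓ N₂ ⊓ N, (hN₁.inf hN₂).inf hN, cons hb (fun h => hbN₁ (le₁ h)) ha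
      (fun h => haN₂ (le₂ h)) (hw.anti (sup_le_sup_left inf_le_right K))⟩

section WordRepresentation

variable {M : ℕ} {Q R : Type*} [Group Q] [CommRing R] {U : Subgroup Q} {θ : P →* Q}
  {Φ : P →* Module.End R (TruncatedWord M Q → R)}

theorem hasLeadingWord_map (hA : ∀ a ∈ A, Φ a = wordTranslation R (θ a))
    (hB : ∀ b ∈ B, Φ b =
      (1 + wordPrepend R U) * wordTranslation R (θ b) * (1 - wordPrepend R U))
    {k : ℕ} {w : P} (hw : IsAlternating A B (U.comap θ) k w) (hk : 2 * k ≤ M)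
    {v : TruncatedWord M Q → R} (hv : HasLeadingWord v []) :
    ∃ l : List Q, l.length + 1 = 2 * k ∧ HasLeadingWord (Φ w v) (1 :: l) := by
  induction hw with
  | @single b a hb hbU ha =>
    refine ⟨[θ b], rfl, ?_⟩
    rw [map_mul, Module.End.mul_apply, hA a ha, hB b hb]
    exact (hv.apply_wordTranslation (θ a)).apply_conj_wordTranslation (by simp) hbU hk
  | @cons b a w k hb hbU ha haU _ ih =>
    obtain ⟨l, hl, hlead⟩ := ih (by omega)
    refine ⟨θ b :: θ a :: l, by simp only [List.length_cons]; omega, ?_⟩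
    have hlead_a := hlead.apply_wordTranslation (θ a)
    rw [List.modifyHead_cons, mul_one] at hlead_a
    rw [map_mul, map_mul, Module.End.mul_apply, Module.End.mul_apply, hA a ha, hB b hb]
    exact hlead_a.apply_conj_wordTranslation (by simpa using haU) hbU
      (by simp only [List.length_cons]; omega)

theorem map_mul_ne_one [Nontrivial R] (hA : ∀ a ∈ A, Φ a = wordTranslation R (θ a))
    (hB : ∀ b ∈ B, Φ b =
      (1 + wordPrepend R U) * wordTranslation R (θ b) * (1 - wordPrepend R U))
    {k : ℕ} {w : P} (hw : IsAlternating A B (U.comap θ) k w) (hk : 2 * k ≤ M)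
    {a : P} (ha : a ∈ A) : Φ (a * w) ≠ 1 := by
  classical
  let v : TruncatedWord M Q → R := fun l => if l.letters = [] then 1 else 0
  have hv : HasLeadingWord v [] :=
    ⟨fun l hl => if_neg (List.length_pos_iff.1 hl), M.zero_le, by simp [v]⟩
  obtain ⟨l, -, hl⟩ := hasLeadingWord_map hA hB hw hk hv
  have hlead := hl.apply_wordTranslation (θ a)
  rw [← hA a ha, ← Module.End.mul_apply, ← map_mul] at hlead
  intro hone
  rw [hone] at hlead
  exact absurd (hv.length_eq hlead) (by simp)

end WordRepresentation

end IsAlternating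

end AlternatingProducts

section Pushout

variable {p : ℕ} {H : Type u} {A : Type v} {B : Type w} {P : Type x}
  [Group H] [Group A] [Group B] [Group P] {φ : H →* A} {ψ : H →* B} {ja : A →* P} {jb : B →* P}

namespace IsAmalgamatedFreeProduct

theorem existsUnique_hom (hP : IsAmalgamatedFreeProduct φ ψ ja jb) {Q : Type*} [Group Q]
    [Small.{max u v w x} Q] {f : A →* Q} {g : B →* Q} (hfg : f.comp φ = g.comp ψ) :
    ∃! h : P →* Q, h.comp ja = f ∧ h.comp jb = g := by
  let e : Q ≃* Shrink.{max u v w x} Q := Shrink.mulEquiv.symm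
  have he : Function.Injective e.toMonoidHom := e.injective
  exact (e.monoidHomCongrRightEquiv.existsUnique_congr fun _ =>
    and_congr (MonoidHom.cancel_left he).symm (MonoidHom.cancel_left he).symm).2
    (hP.2 _ (e.toMonoidHom.comp f) (e.toMonoidHom.comp g) (congrArg e.toMonoidHom.comp hfg))

theorem range_sup_range_s12 (hP : IsAmalgamatedFreeProduct φ ψ ja jb) : ja.range ⊔ jb.range = ⊤ := by
  set L := ja.range ⊔ jb.range
  have : Small.{max u v w x} P := small_max.{max u v w, x} P
  have : Small.{max u v w x} L := small_max.{max u v w, x} L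
  let fa : A →* L := ja.codRestrict L fun a => Subgroup.mem_sup_left ⟨a, rfl⟩
  let fb : B →* L := jb.codRestrict L fun b => Subgroup.mem_sup_right ⟨b, rfl⟩
  obtain ⟨r, ⟨hra, hrb⟩, -⟩ := hP.existsUnique_hom (f := fa) (g := fb)
    (MonoidHom.ext fun z => Subtype.ext (DFunLike.congr_fun hP.1 z))
  have hid : L.subtype.comp r = MonoidHom.id P :=
    (hP.existsUnique_hom hP.1).unique
      ⟨by rw [MonoidHom.comp_assoc, hra]; rfl, by rw [MonoidHom.comp_assoc, hrb]; rfl⟩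
      ⟨rfl, rfl⟩
  refine eq_top_iff.2 fun z _ => ?_
  have hz : (r z : P) = z := DFunLike.congr_fun hid z
  exact hz ▸ (r z).2

theorem exists_twisted_hom (hP : IsAmalgamatedFreeProduct φ ψ ja jb) {Q : Type*} [Group Q]
    [Small.{max u v w x} Q] (θ : P →* Q) {y : Q} (hy : ∀ z ∈ φ.range.map ja, Commute (θ z) y) :
    ∃ F : P →* Q, (∀ a ∈ ja.range, F a = θ a) ∧ ∀ b ∈ jb.range, F b = y * θ b * y⁻¹ := by
  have hcompat : (θ.comp ja).comp φ = ((MulAut.conj y).toMonoidHom.comp (θ.comp jb)).comp ψ := by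
    refine MonoidHom.ext fun z => ?_
    have hz : ja (φ z) = jb (ψ z) := DFunLike.congr_fun hP.1 z
    have hcomm : Commute (θ (ja (φ z))) y := hy _ ⟨_, ⟨z, rfl⟩, rfl⟩
    change θ (ja (φ z)) = y * θ (jb (ψ z)) * y⁻¹
    rw [← hz, ← hcomm.eq, mul_inv_cancel_right]
  obtain ⟨F, ⟨hFa, hFb⟩, -⟩ := hP.existsUnique_hom hcompat
  refine ⟨F, ?_, ?_⟩
  · rintro _ ⟨a, rfl⟩
    exact DFunLike.congr_fun hFa a
  · rintro _ ⟨b, rfl⟩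
    exact DFunLike.congr_fun hFb b

theorem isPSeparated_mul_of_isAlternating [Fact p.Prime]
    (hP : IsAmalgamatedFreeProduct φ ψ ja jb) {N : Subgroup P} (hN : IsPOpenNormal p N) {k : ℕ}
    {a w : P} (ha : a ∈ ja.range)
    (hw : IsAlternating ja.range jb.range (φ.range.map ja ⊔ N) k w) :
    IsPSeparated p ⊥ (a * w) := by
  have := hN.1
  obtain ⟨_, hpN⟩ := (isPOpenNormal_iff_quotient N).1 hN
  let θ : P →* P ⧸ N := QuotientGroup.mk' N
  let U : Subgroup (P ⧸ N) := (φ.range.map ja).map θ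
  have hU : U.comap θ = φ.range.map ja ⊔ N := by
    rw [Subgroup.comap_map_eq, QuotientGroup.ker_mk']
  obtain ⟨Γ, _, σ, y, π, _, hΓ, hcomm, hσ, hy, hy'⟩ := exists_finite_pGroup_twist hpN U (2 * k)
  obtain ⟨F, hFa, hFb⟩ := hP.exists_twisted_hom (σ.comp θ) (y := y)
    fun z hz => hcomm _ (Subgroup.mem_map_of_mem θ hz)
  have hne : (π.comp F) (a * w) ≠ 1 :=
    IsAlternating.map_mul_ne_one (θ := θ)
      (fun a ha => by rw [MonoidHom.comp_apply, hFa a ha, MonoidHom.comp_apply, hσ])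
      (fun b hb => by
        rw [MonoidHom.comp_apply, hFb b hb, map_mul, map_mul, MonoidHom.comp_apply, hσ, hy, hy'])
      (hU ▸ hw) le_rfl ha
  refine isPSeparated_of_map_notMem hΓ F fun h => hne ?_
  rw [Subgroup.map_bot, Subgroup.mem_bot] at h
  rw [MonoidHom.comp_apply, h, map_one]

theorem isResiduallyFinitePGroup [Fact p.Prime] (hP : IsAmalgamatedFreeProduct φ ψ ja jb)
    (ha : ∀ a ∈ ja.range, a ∉ φ.range.map ja → IsPSeparated p (φ.range.map ja) a)
    (hb : ∀ b ∈ jb.range, b ∉ φ.range.map ja → IsPSeparated p (φ.range.map ja) b)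
    (hbot : ∀ z ∈ φ.range.map ja, z ≠ 1 → IsPSeparated p ⊥ z) :
    IsResiduallyFinitePGroup p P := by
  have hKA : φ.range.map ja ≤ ja.range := Subgroup.map_le_range ja _
  have hKB : φ.range.map ja ≤ jb.range := by
    rw [← MonoidHom.range_comp, hP.1, MonoidHom.range_comp]
    exact Subgroup.map_le_range jb _
  rw [isResiduallyFinitePGroup_iff]
  intro h hh
  rcases IsAlternating.mem_or_exists_eq_mul hKA hKB hP.range_sup_range_s12 h with
    hA | ⟨a, haA, k, w, hw, rfl⟩
  · by_cases hK : h ∈ φ.range.map ja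
    · exact hbot h hK hh
    · exact (ha h hA hK).mono bot_le
  · obtain ⟨N, hN, hwN⟩ := hw.exists_isPOpenNormal ha hb
    exact hP.isPSeparated_mul_of_isAlternating hN haA hwN

end IsAmalgamatedFreeProduct

end Pushout

section Roots

/-- The embedding of `A` into `A ≀ᵣ C` as the group of constant functions. -/
def wreathDiagonal (A C : Type*) [Group A] [Group C] : A →* A ≀ᵣ C where
  toFun a := ⟨fun _ => a, 1⟩
  map_one' := rfl
  map_mul' _ _ := RegularWreathProduct.ext rfl (one_mul 1).symm

theorem wreathDiagonal_injective (A C : Type*) [Group A] [Group C] :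
    Function.Injective (wreathDiagonal A C) :=
  fun _ _ h => congrFun (congrArg RegularWreathProduct.left h) 1

theorem regularWreathProduct_mk_pow {A C : Type*} [Group A] [Group C] (a : A) (e : C → ℕ) (t : C)
    (k : ℕ) : (⟨fun j => a ^ e j, t⟩ : A ≀ᵣ C) ^ k =
      ⟨fun j => a ^ ∑ i ∈ Finset.range k, e ((t ^ i)⁻¹ * j), t ^ k⟩ := by
  induction k with
  | zero => exact RegularWreathProduct.ext (funext fun _ => (pow_zero a).symm) (pow_zero t).symm
  | succ k ih =>
    rw [pow_succ, ih]
    refine RegularWreathProduct.ext (funext fun j => ?_) (pow_succ t k).symm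
    simp [Finset.sum_range_succ, pow_add]

theorem exists_pow_eq_wreathDiagonal {A : Type*} [Group A] (a : A) (m : ℕ) [NeZero m] :
    ∃ x : A ≀ᵣ Multiplicative (ZMod m), x ^ m = wreathDiagonal A _ a := by
  classical
  let t : Multiplicative (ZMod m) := Multiplicative.ofAdd 1
  have pow_t (i : ℕ) : t ^ i = Multiplicative.ofAdd (i : ZMod m) := by
    rw [← ofAdd_nsmul, nsmul_one]
  have pow_t_eq (j : Multiplicative (ZMod m)) {i : ℕ} (hi : i < m) :
      (t ^ i)⁻¹ * j = 1 ↔ j.toAdd.val = i := by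
    rw [inv_mul_eq_one, pow_t]
    constructor
    · rintro rfl
      exact ZMod.val_cast_of_lt hi
    · rintro rfl
      exact congrArg Multiplicative.ofAdd (ZMod.natCast_zmod_val j.toAdd)
  have sum_eq_one (j : Multiplicative (ZMod m)) :
      ∑ i ∈ Finset.range m, (if (t ^ i)⁻¹ * j = 1 then 1 else 0) = 1 := by
    rw [Finset.sum_congr rfl fun i hi => if_congr (pow_t_eq j (Finset.mem_range.1 hi)) rfl rfl,
      Finset.sum_ite_eq, if_pos (Finset.mem_range.2 (ZMod.val_lt _))]
  refine ⟨⟨fun j => a ^ (if j = 1 then 1 else 0), t⟩, ?_⟩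
  rw [regularWreathProduct_mk_pow]
  refine RegularWreathProduct.ext (funext fun j => ?_) ?_
  · exact (congrArg (a ^ ·) (sum_eq_one j)).trans (pow_one a)
  · rw [pow_t, ZMod.natCast_self]
    rfl

theorem isPGroup_regularWreathProduct {p : ℕ} [Fact p.Prime] {A C : Type*} [Group A] [Group C]
    [Finite A] [Finite C] (hA : IsPGroup p A) (hC : IsPGroup p C) : IsPGroup p (A ≀ᵣ C) := by
  obtain ⟨a, ha⟩ := hA.exists_card_eq
  obtain ⟨c, hc⟩ := hC.exists_card_eq
  refine IsPGroup.of_card (n := a * p ^ c + c) ?_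
  rw [RegularWreathProduct.card, ha, hc, pow_add, pow_mul]

theorem isPGroup_multiplicative_zmod (p n : ℕ) [Fact p.Prime] :
    IsPGroup p (Multiplicative (ZMod (p ^ n))) :=
  IsPGroup.of_card (n := n) (Nat.card_zmod (p ^ n))

end Roots

section RootAdjunction

/-- `P`, together with `jG : G →* P` and `jx : ℤ →* P`, is obtained from `G` by adjoining an `m`-th
root `x` of `u`; the group `⟨x⟩` is encoded as `Multiplicative ℤ`. -/
def IsRootAdjunction {G : Type v} {P : Type x} [Group G] [Group P] (u : G) (m : ℤ) (jG : G →* P)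
    (jx : Multiplicative ℤ →* P) : Prop :=
  IsAmalgamatedFreeProduct (zpowersHom G u)
    (zpowersHom (Multiplicative ℤ) (Multiplicative.ofAdd m)) jG jx

namespace IsRootAdjunction

variable {G : Type v} {P : Type x} [Group G] [Group P] {u : G} {jG : G →* P}
  {jx : Multiplicative ℤ →* P}

theorem map_zpow_eq {m : ℤ} (hP : IsRootAdjunction u m jG jx) (k : ℤ) :
    jG (u ^ k) = jx (Multiplicative.ofAdd (m * k)) := by
  refine (DFunLike.congr_fun hP.1 (Multiplicative.ofAdd k)).trans (congrArg jx ?_)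
  rw [zpowersHom_apply, toAdd_ofAdd, ← ofAdd_zsmul, smul_eq_mul, mul_comm]

theorem exists_hom {m : ℤ} (hP : IsRootAdjunction u m jG jx) {Q : Type*} [Group Q]
    [Small.{max v x} Q] {f : G →* Q} {r : Q} (hr : r ^ m = f u) :
    ∃ F : P →* Q, F.comp jG = f ∧ F.comp jx = zpowersHom Q r := by
  refine (IsAmalgamatedFreeProduct.existsUnique_hom hP (MonoidHom.ext_mint ?_)).exists
  simp only [MonoidHom.comp_apply, zpowersHom_apply, toAdd_ofAdd, zpow_one, hr]

variable {p n : ℕ} [Fact p.Prime]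

theorem isPSeparated_map (hP : IsRootAdjunction u ((p : ℤ) ^ n) jG jx) {V : Subgroup G} {g : G}
    (hg : IsPSeparated p V g) : IsPSeparated p (V.map jG) (jG g) := by
  obtain ⟨N, hN, hgN⟩ := hg
  have := hN.1
  obtain ⟨_, hpN⟩ := (isPOpenNormal_iff_quotient N).1 hN
  have : NeZero (p ^ n) := ⟨pow_ne_zero n (Fact.out : p.Prime).ne_zero⟩
  let f : G →* G ⧸ N := QuotientGroup.mk' N
  let α : G ⧸ N →* (G ⧸ N) ≀ᵣ Multiplicative (ZMod (p ^ n)) := wreathDiagonal _ _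
  obtain ⟨r, hr⟩ := exists_pow_eq_wreathDiagonal (f u) (p ^ n)
  obtain ⟨F, hF, -⟩ := hP.exists_hom (f := α.comp f) (r := r) (by exact_mod_cast hr)
  refine isPSeparated_of_map_notMem
    (isPGroup_regularWreathProduct hpN (isPGroup_multiplicative_zmod p n)) F ?_
  rwa [Subgroup.map_map, hF, ← Subgroup.map_map, ← MonoidHom.comp_apply, hF, MonoidHom.comp_apply,
    Subgroup.mem_map_iff_mem (wreathDiagonal_injective _ _), ← Subgroup.mem_comap,
    Subgroup.comap_map_eq, QuotientGroup.ker_mk']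

theorem isPSeparated_range_of_not_dvd (hP : IsRootAdjunction u ((p : ℤ) ^ n) jG jx) {k : ℤ}
    (hk : ¬ (p : ℤ) ^ n ∣ k) : IsPSeparated p jG.range (jx (Multiplicative.ofAdd k)) := by
  have : NeZero (p ^ n) := ⟨pow_ne_zero n (Fact.out : p.Prime).ne_zero⟩
  let t : Multiplicative (ZMod (p ^ n)) := Multiplicative.ofAdd 1
  have zpow_t_eq_one_iff (i : ℤ) : t ^ i = 1 ↔ (p : ℤ) ^ n ∣ i := by
    rw [← ofAdd_zsmul, zsmul_one, ofAdd_eq_one, ZMod.intCast_zmod_eq_zero_iff_dvd, Nat.cast_pow]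
  obtain ⟨D, hDG, hDx⟩ := hP.exists_hom (f := 1) ((zpow_t_eq_one_iff _).2 dvd_rfl)
  refine isPSeparated_of_map_notMem (isPGroup_multiplicative_zmod p n) D fun h => hk ?_
  rwa [← MonoidHom.range_comp, hDG, MonoidHom.range_one, Subgroup.mem_bot, ← MonoidHom.comp_apply,
    hDx, zpowersHom_apply, toAdd_ofAdd, zpow_t_eq_one_iff] at h

end IsRootAdjunction

end RootAdjunction

theorem residually_finite_p_of_amalgamated_root_adjunction_general
    (p : ℕ) (hp : p.Prime) {G : Type v} [Group G] (hres : IsResiduallyFinitePGroup p G) (u : G)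
    (hsep : ∀ g, g ∉ Subgroup.zpowers u → IsPSeparated p (Subgroup.zpowers u) g) (n : ℕ)
    {P : Type x} [Group P] (jG : G →* P) (jx : Multiplicative ℤ →* P)
    (hP : IsRootAdjunction u ((p : ℤ) ^ n) jG jx) : IsResiduallyFinitePGroup p P := by
  have : Fact p.Prime := ⟨hp⟩
  rw [isResiduallyFinitePGroup_iff] at hres
  refine IsAmalgamatedFreeProduct.isResiduallyFinitePGroup hP ?_ ?_ ?_
  · rintro _ ⟨g, rfl⟩ hg
    exact hP.isPSeparated_map (hsep g fun h => hg (Subgroup.mem_map_of_mem jG h))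
  · rintro _ ⟨k, rfl⟩ hk
    refine (hP.isPSeparated_range_of_not_dvd (k := k.toAdd) ?_).mono (Subgroup.map_le_range jG _)
    rintro ⟨c, hc⟩
    exact hk ⟨u ^ c, ⟨Multiplicative.ofAdd c, rfl⟩, by rw [hP.map_zpow_eq, ← hc, ofAdd_toAdd]⟩
  · rintro _ ⟨g, -, rfl⟩ hg
    simpa only [Subgroup.map_bot] using
      hP.isPSeparated_map (hres g (ne_of_apply_ne jG (by rwa [map_one])))

/-- **Proposition 6.3.** Let `p` be a prime and `G` a finitely generated group that is
residually a finite `p`-group.  Let `u ∈ G` have infinite order with `C_G(u) = ⟨u⟩`.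
Then for every `n ≥ 0`, the free product with amalgamation `H = G *_{(u = x^{pⁿ})} ⟨x⟩`
is residually a finite `p`-group.  The amalgamated product is any pushout `P` of
`ℤ → G, 1 ↦ u` and `ℤ → ⟨x⟩ = ℤ, 1 ↦ pⁿ`. -/
theorem residually_finite_p_of_amalgamated_root_adjunction
    (p : ℕ) (hp : p.Prime)
    {G : Type u} [Group G] (hfg : Group.FG G)
    (hres : IsResiduallyFinitePGroup p G)
    (u : G) (hu : ¬ IsOfFinOrder u)
    (hcent : Subgroup.centralizer ({u} : Set G) = Subgroup.zpowers u)
    (n : ℕ)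
    {P : Type u} [Group P] (jG : G →* P) (jx : Multiplicative ℤ →* P)
    (hP : IsAmalgamatedFreeProduct (zpowersHom G u)
      (zpowersHom (Multiplicative ℤ) (Multiplicative.ofAdd ((p : ℤ) ^ n))) jG jx) :
    IsResiduallyFinitePGroup p P := by
  have : Fact p.Prime := ⟨hp⟩
  exact residually_finite_p_of_amalgamated_root_adjunction_general p hp hres u
    (hcent ▸ fun _ => hres.isPSeparated_centralizer) n jG jx hP
end
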